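/- arXiv:0902.2795 — 2 statements merged into one kernel-verified Lean document; each statement's English description precedes it below -/
import Mathlib

section
/- Consider an instance of the single-sink k-vertex-connectivity problem: an undirected graph G=(V,E) with nonnegative edge costs, a root r ∈ V, and a terminal set T ⊆ V; let OPT be the minimum cost of a subgraph of G containing k internally vertex-disjoint paths from every terminal to r. For each terminal t ∈ T, let ElemCost(t) be the minimum cost of an edge set forming k internally vertex-disjoint paths from t to vertices of (T ∪ {r}) ∖ {t}. Then Σ_{t ∈ T} ElemCost(t) ≤ 2·OPT. -/
open SimpleGraph

/-- Two walks between the same pair of vertices are *element-disjoint* with respect to a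
terminal set `T` if they share no edges and every common vertex is a terminal or an
endpoint. -/
def ElemDisjWalks {V : Type*} (T : Set V) {G : SimpleGraph V} {u v : V}
    (W₁ W₂ : G.Walk u v) : Prop :=
  (∀ e, e ∈ W₁.edges → e ∉ W₂.edges) ∧
  (∀ x, x ∈ W₁.support → x ∈ W₂.support → x ∈ T ∪ {u, v})

/-- There exist `k` pairwise element-disjoint `u`-`v` paths in `G`
(with respect to the terminal set `T`). -/
def HasElemPaths {V : Type*} (G : SimpleGraph V) (T : Set V) (u v : V) (k : ℕ) : Prop :=
  ∃ P : Fin k → G.Walk u v, (∀ i, (P i).IsPath) ∧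
    ∀ i j, i ≠ j → ElemDisjWalks T (P i) (P j)

/-- The element-connectivity `κ'_G(u,v)`: the maximum number of `u`-`v` paths that are
pairwise disjoint in edges and in non-terminal vertices. -/
noncomputable def elemConn {V : Type*} (G : SimpleGraph V) (T : Set V) (u v : V) : ℕ :=
  sSup {k | HasElemPaths G T u v k}

/-- `H` contains `k` internally vertex-disjoint `t`-`r` paths. -/
def HasFan {V : Type*} (H : SimpleGraph V) (t r : V) (k : ℕ) : Prop :=
  ∃ P : Fin k → H.Walk t r, (∀ i, (P i).IsPath) ∧
    ∀ i j, i ≠ j → ∀ x, x ∈ (P i).support → x ∈ (P j).support → x = t ∨ x = r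

/-- The total cost of the edges of `H`. -/
noncomputable def cost {V : Type*} (c : Sym2 V → ℝ) (H : SimpleGraph V) : ℝ :=
  ∑ᶠ e ∈ H.edgeSet, c e

/-- `H` contains `k` paths from `t` to vertices of `(T ∪ {r}) \ {t}` that pairwise share
no vertex other than `t` and common endpoints. -/
def HasElemFanTo {V : Type*} (H : SimpleGraph V) (T : Set V) (r t : V) (k : ℕ) : Prop :=
  ∃ (e : Fin k → V) (P : ∀ i, H.Walk t (e i)),
    (∀ i, e i ∈ (T ∪ {r}) \ {t}) ∧ (∀ i, (P i).IsPath) ∧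
    (∀ i j, i ≠ j → ∀ x, x ∈ (P i).support → x ∈ (P j).support →
      x = t ∨ (x = e i ∧ x = e j))

/-- `ElemCost(t)`: the minimum cost of an edge set of `G` forming `k` internally
vertex-disjoint paths from `t` to vertices of `(T ∪ {r}) \ {t}`. -/
noncomputable def elemCost {V : Type*} (G : SimpleGraph V) (c : Sym2 V → ℝ)
    (T : Set V) (r t : V) (k : ℕ) : ℝ :=
  sInf {x | ∃ H : SimpleGraph V, H ≤ G ∧ HasElemFanTo H T r t k ∧ x = cost c H}

/-- outer vertex boundary -/
def nbd {V : Type*} (K : SimpleGraph V) (U : Set V) : Set V := {x | x ∉ U ∧ ∃ u ∈ U, K.Adj u x}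

def CutOK {V : Type*} (K : SimpleGraph V) (A : Set V) (k : ℕ) : Prop :=
  ∀ t ∈ A, ∀ U : Set V, t ∈ U → (∀ x ∈ U, x ∈ A → x = t) → (∀ x ∈ nbd K U, x ∉ A) →
    k ≤ (nbd K U).ncard

def GoodFam {V : Type*} (K : SimpleGraph V) (A : Set V) (k : ℕ) : Prop :=
  ∃ Gr : V → SimpleGraph V, (∀ i, Gr i ≤ K) ∧ (∀ i a b, (Gr i).Adj a b → a ∉ A ∨ b ∉ A) ∧
    (∀ i j x a b, x ∉ A → (Gr i).Adj x a → (Gr j).Adj x b → i = j) ∧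
    ∀ t ∈ A, (∃ t' ∈ A, K.Adj t t') ∨
      k ≤ {i | ∃ t' ∈ A, t' ≠ t ∧ (Gr i).Reachable t t'}.ncard

def delE {V : Type*} (K : SimpleGraph V) (p q : V) : SimpleGraph V where
  Adj a b := K.Adj a b ∧ ¬ (a = p ∧ b = q) ∧ ¬ (a = q ∧ b = p)
  symm := ⟨fun a b h => ⟨h.1.symm, fun h' => h.2.2 ⟨h'.2, h'.1⟩, fun h' => h.2.1 ⟨h'.2, h'.1⟩⟩⟩
  loopless := ⟨fun a h => K.loopless.irrefl a h.1⟩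

open Classical in
noncomputable def cf {V : Type*} (p q : V) (x : V) : V := if x = q then p else x

def conE {V : Type*} (K : SimpleGraph V) (p q : V) : SimpleGraph V where
  Adj x y := x ≠ y ∧ ∃ a b, cf p q a = x ∧ cf p q b = y ∧ K.Adj a b
  symm := ⟨fun _ _ h => ⟨h.1.symm, by obtain ⟨a, b, h1, h2, h3⟩ := h.2; exact ⟨b, a, h2, h1, h3.symm⟩⟩⟩
  loopless := ⟨fun _ h => h.1 rfl⟩

lemma comb_base {V : Type*} [Fintype V] (K : SimpleGraph V) (A : Set V) (k : ℕ)
    (h : CutOK K A k) (hn : ∀ a b, K.Adj a b → a ∉ A → b ∈ A) : GoodFam K A k := by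
  refine ⟨fun i => { Adj := fun a b => K.Adj a b ∧ i ∉ A ∧ ((a = i ∧ b ∈ A) ∨ (b = i ∧ a ∈ A))
                     symm := ⟨fun a b h => ⟨h.1.symm, h.2.1, h.2.2.symm⟩⟩
                     loopless := ⟨fun a h => K.loopless.irrefl a h.1⟩ }, ?_, ?_, ?_, ?_⟩
  · intro i a b h
    exact h.1
  · rintro i a b ⟨_, h1, h2⟩
    grind
  · rintro i j x a b hx ⟨_, h1, h2⟩ ⟨_, h3, h4⟩
    grind
  · intro t ht
    by_cases htt : ∃ t' ∈ A, K.Adj t t'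
    · exact Or.inl htt
    right
    push Not at htt
    have key : ∀ x ∈ nbd K {x | x = t ∨ (x ∉ A ∧ ∀ y, K.Adj x y → y = t)},
        x ∉ A ∧ K.Adj t x ∧ ∃ y ∈ A, y ≠ t ∧ K.Adj x y := by
      rintro x ⟨hx, u, hu, hux⟩
      simp only [Set.mem_ofPred_eq, not_or, not_and, not_forall] at hx hu
      have hut : u = t := by
        rcases hu with rfl | hu
        · rfl
        · exact absurd (hu.2 x hux) hx.1
      subst hut
      have hxA : x ∉ A := fun hh => htt x hh hux
      obtain ⟨y, hy, hyt⟩ := hx.2 hxA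
      exact ⟨hxA, hux, y, hn x y hy hxA, hyt, hy⟩
    refine (h t ht _ (Or.inl rfl) ?_ (fun x hx => (key x hx).1)).trans
      (Set.ncard_le_ncard ?_ (Set.toFinite _))
    · rintro x (hx | hx) hxA
      · exact hx
      · exact absurd hxA hx.1
    · intro x hx
      obtain ⟨hxA, htx, y, hyA, hyt, hxy⟩ := key x hx
      refine ⟨y, hyA, hyt, ?_⟩
      refine SimpleGraph.Reachable.trans (v := x) (SimpleGraph.Adj.reachable ?_)
        (SimpleGraph.Adj.reachable ?_)
      · exact ⟨htx, hxA, Or.inr ⟨rfl, ht⟩⟩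
      · exact ⟨hxy, hxA, Or.inl ⟨rfl, hyA⟩⟩

/-- core uncrossing -/
lemma uncross {V : Type*} [Fintype V] (K : SimpleGraph V) (A : Set V) (k : ℕ)
    (h : CutOK K A k) (p q : V)
    (s : V) (hs : s ∈ A) (Us : Set V) (hsU : s ∈ Us) (hsA : ∀ x ∈ Us, x ∈ A → x = s)
    (hsN : ∀ x ∈ nbd K Us, x ∉ A) (hsk : (nbd K Us).ncard ≤ k)
    (hps : p ∈ nbd K Us) (hqs : q ∈ nbd K Us)
    (t : V) (ht : t ∈ A) (Ut : Set V) (htU : t ∈ Ut) (htA : ∀ x ∈ Ut, x ∈ A → x = t)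
    (htN : ∀ x ∈ nbd (delE K p q) Ut, x ∉ A) (htk : (nbd (delE K p q) Ut).ncard < k)
    (hpt : p ∈ Ut) (hqt : q ∉ Ut) : False := by
  set P := nbd K Us with hP
  set Q := nbd (delE K p q) Ut with hQ
  have mP : ∀ x, x ∈ P ↔ x ∉ Us ∧ ∃ u ∈ Us, K.Adj u x := fun x => Iff.rfl
  have mQ : ∀ x, x ∈ Q ↔ x ∉ Ut ∧ ∃ u ∈ Ut, K.Adj u x ∧ ¬ (u = p ∧ x = q) ∧ ¬ (u = q ∧ x = p) :=
    fun x => Iff.rfl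
  have hpU : p ∉ Us := hps.1
  have hqU : q ∉ Us := hqs.1
  have cP1 := Set.ncard_inter_add_ncard_sdiff_eq_ncard P Ut (Set.toFinite _)
  have cQ1 := Set.ncard_inter_add_ncard_sdiff_eq_ncard Q Us (Set.toFinite _)
  by_cases hst : s = t
  · subst hst
    have h1 := h s hs (Us ∩ Ut) ⟨hsU, htU⟩ (fun x hx => hsA x hx.1)
    have h2 := h s hs (Us ∪ Ut) (Or.inl hsU) (by rintro x (hx | hx); exacts [hsA x hx, htA x hx])
    have s1 : nbd K (Us ∩ Ut) ⊆ (P ∩ Ut) ∪ (Q ∩ Us) ∪ (P ∩ Q) := by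
      rintro x ⟨hx, u, ⟨hu1, hu2⟩, hux⟩
      have e1 : x ∉ Us → x ∈ P := fun hh => ⟨hh, u, hu1, hux⟩
      have e2 : x ∉ Ut → x ∈ Q := fun hh => (mQ x).2 ⟨hh, u, hu2, hux, by grind, by grind⟩
      simp only [Set.mem_inter_iff, Set.mem_union] at hx ⊢
      tauto
    have s2 : nbd K (Us ∪ Ut) ⊆ (P \ Ut) ∪ (Q \ Us) := by
      rintro x ⟨hx, u, hu, hux⟩
      simp only [Set.mem_union, not_or] at hx hu
      simp only [Set.mem_union, Set.mem_sdiff]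
      by_cases hxq : x = q
      · subst hxq; exact Or.inl ⟨hqs, hqt⟩
      rcases hu with hu | hu
      · exact Or.inl ⟨⟨hx.1, u, hu, hux⟩, hx.2⟩
      · exact Or.inr ⟨(mQ x).2 ⟨hx.2, u, hu, hux, by grind, by grind⟩, hx.1⟩
    have h1' := h1 (fun x hx => by
      rcases s1 hx with (hh | hh) | hh
      exacts [hsN x hh.1, htN x hh.1, hsN x hh.1])
    have h2' := h2 (fun x hx => by
      rcases s2 hx with hh | hh
      exacts [hsN x hh.1, htN x hh.1])
    have n1 := Set.ncard_le_ncard s1 (Set.toFinite _)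
    have n2 := Set.ncard_le_ncard s2 (Set.toFinite _)
    have n3 := Set.ncard_union_le (P ∩ Ut ∪ Q ∩ Us) (P ∩ Q)
    have n4 := Set.ncard_union_le (P ∩ Ut) (Q ∩ Us)
    have n5 := Set.ncard_union_add_ncard_inter (P \ Ut) (Q \ Us) (Set.toFinite _) (Set.toFinite _)
    have n6 : (P ∩ Q).ncard ≤ ((P \ Ut) ∩ (Q \ Us)).ncard := by
      apply Set.ncard_le_ncard _ (Set.toFinite _)
      rintro x ⟨hx1, hx2⟩
      exact ⟨⟨hx1, hx2.1⟩, hx2, hx1.1⟩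
    omega
  · have h1 := h s hs (Us \ (Ut ∪ Q)) ⟨hsU, by
      rintro (hh | hh)
      · exact hst (htA s hh hs)
      · exact htN s hh hs⟩ (fun x hx => hsA x hx.1)
    have h2 := h t ht (Ut \ (Us ∪ P)) ⟨htU, by
      rintro (hh | hh)
      · exact hst (hsA t hh ht).symm
      · exact hsN t hh ht⟩ (fun x hx => htA x hx.1)
    have s1 : nbd K (Us \ (Ut ∪ Q)) ⊆ (P \ Ut) ∪ (Q ∩ Us) := by
      rintro x ⟨hx, u, ⟨hu1, hu2⟩, hux⟩
      simp only [Set.mem_union, not_or, Set.mem_sdiff, Set.mem_inter_iff] at hx hu2 ⊢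
      have e1 : x ∉ Us → x ∈ P := fun hh => ⟨hh, u, hu1, hux⟩
      have e2 : x ∉ Ut := fun hh => hu2.2 ((mQ u).2 ⟨hu2.1, x, hh, hux.symm, by grind, by grind⟩)
      tauto
    have s2 : nbd K (Ut \ (Us ∪ P)) ⊆ (Q \ Us) ∪ (P ∩ Ut) := by
      rintro x ⟨hx, u, ⟨hu1, hu2⟩, hux⟩
      simp only [Set.mem_union, not_or, Set.mem_sdiff, Set.mem_inter_iff] at hx hu2 ⊢
      have e1 : x ∉ Ut → x ∈ Q := fun hh => (mQ x).2 ⟨hh, u, hu1, hux, by grind, by grind⟩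
      have e2 : x ∉ Us := fun hh => hu2.2 ⟨hu2.1, x, hh, hux.symm⟩
      tauto
    have h1' := h1 (fun x hx => by
      rcases s1 hx with hh | hh
      exacts [hsN x hh.1, htN x hh.1])
    have h2' := h2 (fun x hx => by
      rcases s2 hx with hh | hh
      exacts [htN x hh.1, hsN x hh.1])
    have n1 := Set.ncard_le_ncard s1 (Set.toFinite _)
    have n2 := Set.ncard_le_ncard s2 (Set.toFinite _)
    have n3 := Set.ncard_union_le (P \ Ut) (Q ∩ Us)
    have n4 := Set.ncard_union_le (Q \ Us) (P ∩ Ut)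
    omega

lemma delE_comm {V : Type*} (K : SimpleGraph V) (p q : V) : delE K p q = delE K q p := by
  ext a b
  simp only [delE]
  tauto

lemma con_tight {V : Type*} [Fintype V] (K : SimpleGraph V) (A : Set V) (k : ℕ)
    (h : CutOK K A k) (p q : V) (hpA : p ∉ A) (hqA : q ∉ A)
    (hcon : ¬ CutOK (conE K p q) A k) :
    ∃ s ∈ A, ∃ Us : Set V, s ∈ Us ∧ (∀ x ∈ Us, x ∈ A → x = s) ∧ (∀ x ∈ nbd K Us, x ∉ A) ∧
      (nbd K Us).ncard ≤ k ∧ p ∈ nbd K Us ∧ q ∈ nbd K Us := by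
  unfold CutOK at hcon
  push Not at hcon
  obtain ⟨s, hs, U, hsU, hUA, hN, hlt⟩ := hcon
  have fA : ∀ x ∈ A, cf p q x = x := fun x hx => by
    unfold cf; rw [if_neg]; rintro rfl; exact hqA hx
  have hmap : ∀ x ∈ nbd K (cf p q ⁻¹' U), cf p q x ∈ nbd (conE K p q) U := by
    rintro x ⟨hx, u, hu, hux⟩
    refine ⟨hx, cf p q u, hu, ?_, u, x, rfl, rfl, hux⟩
    intro he
    apply hx
    show cf p q x ∈ U
    rw [← he]; exact hu
  have c3 : ∀ x ∈ nbd K (cf p q ⁻¹' U), x ∉ A := by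
    intro x hx hxA
    have := hN _ (hmap x hx)
    rw [fA x hxA] at this
    exact this hxA
  have c1 : s ∈ cf p q ⁻¹' U := by show cf p q s ∈ U; rw [fA s hs]; exact hsU
  have c2 : ∀ x ∈ cf p q ⁻¹' U, x ∈ A → x = s := by
    intro x hx hxA
    have hx' : cf p q x ∈ U := hx
    rw [fA x hxA] at hx'
    exact hUA x hx' hxA
  have hk := h s hs _ c1 c2 c3
  have hni : ¬ Set.InjOn (cf p q) (nbd K (cf p q ⁻¹' U)) := by
    intro hi
    have := Set.ncard_le_ncard_of_injOn (cf p q) hmap hi (Set.toFinite _)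
    omega
  have hpq : p ∈ nbd K (cf p q ⁻¹' U) ∧ q ∈ nbd K (cf p q ⁻¹' U) := by
    by_contra hcon
    apply hni
    intro x hx y hy hxy
    unfold cf at hxy
    by_cases hxq : x = q <;> by_cases hyq : y = q <;> simp only [hxq, hyq, if_true, if_false] at hxy
    · rw [hxq, hyq]
    · subst hxq; subst hxy; exact absurd ⟨hy, hx⟩ hcon
    · subst hyq; subst hxy; exact absurd ⟨hx, hy⟩ hcon
    · exact hxy
  refine ⟨s, hs, _, c1, c2, c3, ?_, hpq.1, hpq.2⟩
  have hi : Set.InjOn (cf p q) (nbd K (cf p q ⁻¹' U) \ {q}) := by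
    intro x hx y hy hxy
    unfold cf at hxy
    have e1 : x ≠ q := hx.2
    have e2 : y ≠ q := hy.2
    rwa [if_neg e1, if_neg e2] at hxy
  have := Set.ncard_le_ncard_of_injOn (cf p q) (fun x hx => hmap x hx.1) hi (Set.toFinite _)
  have h2 := Set.ncard_sdiff_singleton_add_one hpq.2 (Set.toFinite _)
  omega

lemma con_or_del {V : Type*} [Fintype V] (K : SimpleGraph V) (A : Set V) (k : ℕ)
    (h : CutOK K A k) (p q : V) (hpA : p ∉ A) (hqA : q ∉ A) :
    CutOK (conE K p q) A k ∨ CutOK (delE K p q) A k := by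
  by_contra hcon
  push Not at hcon
  obtain ⟨hc, hd⟩ := hcon
  obtain ⟨s, hs, Us, c1, c2, c3, c4, c5, c6⟩ := con_tight K A k h p q hpA hqA hc
  unfold CutOK at hd
  push Not at hd
  obtain ⟨t, ht, Ut, htU, htA, htN, htk⟩ := hd
  by_cases h1 : p ∈ Ut ∧ q ∉ Ut
  · exact uncross K A k h p q s hs Us c1 c2 c3 c4 c5 c6 t ht Ut htU htA htN htk h1.1 h1.2
  by_cases h2 : q ∈ Ut ∧ p ∉ Ut
  · rw [delE_comm] at htN htk
    exact uncross K A k h q p s hs Us c1 c2 c3 c4 c6 c5 t ht Ut htU htA htN htk h2.1 h2.2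
  have : nbd K Ut = nbd (delE K p q) Ut := by
    ext x
    constructor
    · rintro ⟨hx, u, hu, hux⟩
      exact ⟨hx, u, hu, hux, by grind, by grind⟩
    · rintro ⟨hx, u, hu, hux⟩
      exact ⟨hx, u, hu, hux.1⟩
  rw [← this] at htN htk
  have := h t ht Ut htU htA htN
  omega

lemma good_del {V : Type*} (K : SimpleGraph V) (A : Set V) (k : ℕ) (p q : V)
    (h : GoodFam (delE K p q) A k) : GoodFam K A k := by
  obtain ⟨Gr, h1, h2, h3, h4⟩ := h
  refine ⟨Gr, fun i a b hab => (h1 i hab).1, h2, h3, fun t ht => ?_⟩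
  rcases h4 t ht with ⟨t', ht', h⟩ | h
  · exact Or.inl ⟨t', ht', h.1⟩
  · exact Or.inr h

def liftG {V : Type*} (K L : SimpleGraph V) (p q : V) : SimpleGraph V where
  Adj a b := K.Adj a b ∧ (L.Adj (cf p q a) (cf p q b) ∨
    (((a = p ∧ b = q) ∨ (a = q ∧ b = p)) ∧ ∃ z, L.Adj p z))
  symm := ⟨fun a b h => ⟨h.1.symm, by
    rcases h.2 with h | ⟨h, h'⟩
    · exact Or.inl h.symm
    · exact Or.inr ⟨by tauto, h'⟩⟩⟩
  loopless := ⟨fun a h => K.loopless.irrefl a h.1⟩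

lemma good_con {V : Type*} [Fintype V] (K : SimpleGraph V) (A : Set V) (k : ℕ) (p q : V)
    (hpA : p ∉ A) (hqA : q ∉ A) (hpq : K.Adj p q)
    (h : GoodFam (conE K p q) A k) : GoodFam K A k := by
  obtain ⟨Gr, h1, h2, h3, h4⟩ := h
  have fA : ∀ x y, cf p q x = y → y ∈ A → x = y := fun x y hx hy => by
    unfold cf at hx
    by_cases hxq : x = q
    · rw [if_pos hxq] at hx; subst hx; exact absurd hy hpA
    · rwa [if_neg hxq] at hx
  have fA' : ∀ x ∈ A, cf p q x = x := fun x hx => by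
    unfold cf; rw [if_neg]; rintro rfl; exact hqA hx
  have fN : ∀ x, x ∉ A → cf p q x ∉ A := fun x hx => by
    unfold cf; split_ifs <;> assumption
  have fq : cf p q q = p := by simp [cf]
  have fp : cf p q p = p := by simp [cf]
  refine ⟨fun i => liftG K (Gr i) p q, ?_, ?_, ?_, ?_⟩
  · intro i a b h
    exact h.1
  · rintro i a b ⟨_, h | ⟨h, _⟩⟩
    · rcases h2 i _ _ h with h | h
      · left; intro ha; exact h (by rwa [fA' a ha])
      · right; intro ha; exact h (by rwa [fA' b ha])
    · grind
  · have aux : ∀ i x a, (K.Adj x a ∧ ((Gr i).Adj (cf p q x) (cf p q a) ∨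
                        (((x = p ∧ a = q) ∨ (x = q ∧ a = p)) ∧ ∃ z, (Gr i).Adj p z))) →
        ∃ z, (Gr i).Adj (cf p q x) z := by
      rintro i x a ⟨_, h | ⟨(h | h), h'⟩⟩
      · exact ⟨_, h⟩
      · rw [h.1, fp]; exact h'
      · rw [h.1, fq]; exact h'
    intro i j x a b hx ha hb
    obtain ⟨z, hz⟩ := aux i x a ha
    obtain ⟨z', hz'⟩ := aux j x b hb
    exact h3 i j _ z z' (fN x hx) hz hz'
  · intro t ht
    rcases h4 t ht with ⟨t', ht', h⟩ | h
    · obtain ⟨_, a, b, ha, hb, hab⟩ := h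
      rw [fA a t ha ht, fA b t' hb ht'] at hab
      exact Or.inl ⟨_, ht', hab⟩
    · right
      refine h.trans (Set.ncard_le_ncard ?_ (Set.toFinite _))
      rintro i ⟨t', ht', htt, hr⟩
      refine ⟨t', ht', htt, ?_⟩
      clear ht' htt h ht
      obtain ⟨w⟩ := hr
      induction w with
      | nil => exact SimpleGraph.Reachable.refl _
      | @cons x y z hxy w ih =>
        refine SimpleGraph.Reachable.trans ?_ ih
        obtain ⟨_, a, b, ha, hb, hab⟩ := h1 i hxy
        have r0 : ∀ a x y, cf p q a = x → (Gr i).Adj x y → (liftG K (Gr i) p q).Reachable a x := by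
          intro a x y hax hxy
          by_cases haq : a = q
          · rw [haq, fq] at hax
            subst hax; subst haq
            apply SimpleGraph.Adj.reachable
            exact ⟨hpq.symm, Or.inr ⟨Or.inr ⟨rfl, rfl⟩, y, hxy⟩⟩
          · unfold cf at hax
            rw [if_neg haq] at hax
            rw [hax]
        refine (r0 a x y ha hxy).symm.trans (SimpleGraph.Reachable.trans (SimpleGraph.Adj.reachable ?_) (r0 b y x hb hxy.symm))
        exact ⟨hab, Or.inl (by rw [ha, hb]; exact hxy)⟩

lemma comb {V : Type*} [Fintype V] (A : Set V) (k : ℕ) (n : ℕ) : ∀ (K : SimpleGraph V),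
    {x : V × V | K.Adj x.1 x.2 ∧ x.1 ∉ A ∧ x.2 ∉ A}.ncard ≤ n → CutOK K A k → GoodFam K A k := by
  induction n with
  | zero =>
    intro K hn h
    apply comb_base K A k h
    intro a b hab ha
    by_contra hb
    have h0 : {x : V × V | K.Adj x.1 x.2 ∧ x.1 ∉ A ∧ x.2 ∉ A} = ∅ :=
      (Set.ncard_eq_zero (Set.toFinite _)).1 (by omega)
    have : (a, b) ∈ {x : V × V | K.Adj x.1 x.2 ∧ x.1 ∉ A ∧ x.2 ∉ A} := ⟨hab, ha, hb⟩
    rw [h0] at this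
    exact this
  | succ n ih =>
    intro K hn h
    by_cases hne : ∀ a b, K.Adj a b → a ∉ A → b ∈ A
    · exact comb_base K A k h hne
    push Not at hne
    obtain ⟨p, q, hpq, hp, hq⟩ := hne
    have hlt : ({x : V × V | K.Adj x.1 x.2 ∧ x.1 ∉ A ∧ x.2 ∉ A} \ {(p, q)}).ncard ≤ n := by
      have := Set.ncard_sdiff_singleton_add_one
        (show (p, q) ∈ {x : V × V | K.Adj x.1 x.2 ∧ x.1 ∉ A ∧ x.2 ∉ A} from ⟨hpq, hp, hq⟩)
        (Set.toFinite _)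
      omega
    rcases con_or_del K A k h p q hp hq with hc | hd
    · refine good_con K A k p q hp hq hpq (ih _ (le_trans ?_ hlt) hc)
      refine le_trans (Set.ncard_le_ncard ?_ (Set.toFinite _))
        (Set.ncard_image_le (f := fun x : V × V => (cf p q x.1, cf p q x.2)) (Set.toFinite _))
      rintro ⟨x, y⟩ ⟨⟨hxy, a, b, ha, hb, hab⟩, hx, hy⟩
      simp only at hx hy ha hb hxy
      refine ⟨(a, b), ⟨⟨hab, ?_, ?_⟩, ?_⟩, by simp [ha, hb]⟩
      · intro haA; apply hx; rw [← ha]; unfold cf; rw [if_neg (by rintro rfl; exact hq haA)]; exact haA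
      · intro haA; apply hy; rw [← hb]; unfold cf; rw [if_neg (by rintro rfl; exact hq haA)]; exact haA
      · intro he
        simp only [Set.mem_singleton_iff, Prod.mk.injEq] at he
        apply hxy
        rw [← ha, ← hb, he.1, he.2]
        simp [cf]
    · refine good_del K A k p q (ih _ (le_trans ?_ hlt) hd)
      apply Set.ncard_le_ncard _ (Set.toFinite _)
      rintro ⟨x, y⟩ ⟨hxy, hx, hy⟩
      refine ⟨⟨hxy.1, hx, hy⟩, ?_⟩
      intro he
      simp only [Set.mem_singleton_iff, Prod.mk.injEq] at he
      exact hxy.2.1 he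

noncomputable def wc {V : Type*} {G : SimpleGraph V} (c : Sym2 V → ℝ) {u v : V} (p : G.Walk u v) : ℝ :=
  (p.edges.map c).sum

lemma wc_append {V : Type*} {G : SimpleGraph V} (c : Sym2 V → ℝ) {u v w : V} (p : G.Walk u v)
    (q : G.Walk v w) : wc c (p.append q) = wc c p + wc c q := by
  simp [wc]

lemma wc_reverse {V : Type*} {G : SimpleGraph V} (c : Sym2 V → ℝ) {u v : V} (p : G.Walk u v) :
    wc c p.reverse = wc c p := by
  simp [wc]

lemma wc_nonneg {V : Type*} {G : SimpleGraph V} (c : Sym2 V → ℝ) (hc : ∀ e, 0 ≤ c e) {u v : V}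
    (p : G.Walk u v) : 0 ≤ wc c p := by
  apply List.sum_nonneg
  simp only [List.mem_map]
  rintro x ⟨e, _, rfl⟩
  exact hc e

lemma wc_cons {V : Type*} {G : SimpleGraph V} (c : Sym2 V → ℝ) {u v w : V} (h : G.Adj u v)
    (q : G.Walk v w) : wc c (SimpleGraph.Walk.cons h q) = c s(u, v) + wc c q := by
  simp [wc]

lemma wc_nil {V : Type*} {G : SimpleGraph V} (c : Sym2 V → ℝ) {u : V} :
    wc c (SimpleGraph.Walk.nil : G.Walk u u) = 0 := by
  simp [wc]

lemma exists_path_wc {V : Type*} {G : SimpleGraph V} (c : Sym2 V → ℝ) (hc : ∀ e, 0 ≤ c e) {u v : V}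
    (p : G.Walk u v) : ∃ q : G.Path u v, wc c q.1 ≤ wc c p := by
  classical
  refine ⟨p.toPath, ?_⟩
  unfold wc
  apply List.Sublist.sum_le_sum
  · exact (SimpleGraph.Walk.edges_bypass_sublist_edges p).map c
  · simp only [List.mem_map]
    rintro x ⟨e, _, rfl⟩
    exact hc e

/-- nearest terminal path -/
lemma nearest {V : Type*} [Fintype V] (G : SimpleGraph V) (c : Sym2 V → ℝ) (hc : ∀ e, 0 ≤ c e)
    (A : Set V) (s : V) (h : ∃ s' ∈ A, s' ≠ s ∧ G.Reachable s s') :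
    ∃ s', ∃ p : G.Walk s s', s' ∈ A ∧ s' ≠ s ∧ p.IsPath ∧
      (∀ x ∈ p.support, x ∈ A → x = s ∨ x = s') ∧
      ∀ t ∈ A, t ≠ s → ∀ q : G.Walk s t, wc c p ≤ wc c q := by
  classical
  -- minimal cost
  obtain ⟨m, hm, hmin⟩ : ∃ m : Σ t : {t // t ∈ A ∧ t ≠ s}, G.Path s t.1, True ∧
      ∀ m' : Σ t : {t // t ∈ A ∧ t ≠ s}, G.Path s t.1, wc c m.2.1 ≤ wc c m'.2.1 := by
    obtain ⟨s', h1, h2, ⟨w⟩⟩ := h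
    haveI : Nonempty (Σ t : {t // t ∈ A ∧ t ≠ s}, G.Path s t.1) := ⟨⟨⟨s', h1, h2⟩, w.toPath⟩⟩
    obtain ⟨m, hm⟩ := Finite.exists_min (fun m : Σ t : {t // t ∈ A ∧ t ≠ s}, G.Path s t.1 => wc c m.2.1)
    exact ⟨m, trivial, hm⟩
  have hmin' : ∀ t ∈ A, t ≠ s → ∀ q : G.Walk s t, wc c m.2.1 ≤ wc c q := by
    intro t ht hts q
    obtain ⟨q', hq'⟩ := exists_path_wc c hc q
    exact (hmin ⟨⟨t, ht, hts⟩, q'⟩).trans hq'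
  let Pr : ℕ → Prop := fun n => ∃ s', ∃ p : G.Walk s s', s' ∈ A ∧ s' ≠ s ∧ p.IsPath ∧
    wc c p ≤ wc c m.2.1 ∧ p.length = n
  have hex : ∃ n, Pr n := ⟨_, m.1.1, m.2.1, m.1.2.1, m.1.2.2, m.2.2, le_rfl, rfl⟩
  obtain ⟨s', p, h1, h2, h3, h4, h5⟩ := Nat.find_spec hex
  refine ⟨s', p, h1, h2, h3, ?_, fun t ht hts q => h4.trans (hmin' t ht hts q)⟩
  intro x hx hxA
  by_contra hcon
  push Not at hcon
  have hlt := SimpleGraph.Walk.length_takeUntil_lt_length hx hcon.2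
  rw [h5] at hlt
  refine Nat.find_min hex hlt ⟨x, p.takeUntil x hx, hxA, hcon.1, h3.takeUntil hx, ?_, rfl⟩
  refine le_trans ?_ h4
  have h6 := wc_append c (p.takeUntil x hx) (p.dropUntil x hx)
  rw [SimpleGraph.Walk.take_spec] at h6
  have := wc_nonneg c hc (p.dropUntil x hx)
  linarith

lemma two_sum {V : Type*} (S : Finset V) (a b h : V → ℝ) (C : ℝ) (hC : 0 ≤ C)
    (ha : ∀ s ∈ S, a s ≤ h s) (hb : ∀ s ∈ S, b s ≤ h s) (hab : ∀ s ∈ S, |a s - b s| ≤ C)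
    (haa : ∀ s ∈ S, ∀ t ∈ S, s ≠ t → a s < h s → a t < h t → False)
    (hbb : ∀ s ∈ S, ∀ t ∈ S, s ≠ t → b s < h s → b t < h t → False)
    (hh : ∀ s ∈ S, ∀ t ∈ S, s ≠ t → a s < h s → b t < h t → h s + h t ≤ a s + b t + C) :
    ∑ s ∈ S, |a s - b s| ≤ C := by
  classical
  have hzero : ∀ s ∈ S, ¬ a s < h s → ¬ b s < h s → |a s - b s| = 0 := by
    intro s hs h1 h2
    have e1 := le_antisymm (ha s hs) (not_lt.1 h1)
    have e2 := le_antisymm (hb s hs) (not_lt.1 h2)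
    rw [e1, e2]; simp
  by_cases hA : ∃ s ∈ S, a s < h s
  · obtain ⟨s, hs, hsa⟩ := hA
    by_cases hB : ∃ t ∈ S, t ≠ s ∧ b t < h t
    · obtain ⟨t, ht, hts, htb⟩ := hB
      have hsub : ({s, t} : Finset V) ⊆ S := by
        intro x hx; simp at hx; rcases hx with rfl | rfl <;> assumption
      rw [← Finset.sum_subset hsub, Finset.sum_pair hts.symm]
      · have h1 : b s = h s := by
          by_contra hne
          exact hbb s hs t ht hts.symm (lt_of_le_of_ne (hb s hs) hne) htb
        have h2 : a t = h t := by
          by_contra hne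
          exact haa s hs t ht hts.symm hsa (lt_of_le_of_ne (ha t ht) hne)
        have := hh s hs t ht hts.symm hsa htb
        rw [abs_of_nonpos (by linarith), abs_of_nonneg (by linarith)]
        linarith
      · intro x hx hxn
        simp only [Finset.mem_insert, Finset.mem_singleton, not_or] at hxn
        exact hzero x hx (fun hl => haa x hx s hs hxn.1 hl hsa) (fun hl => hbb x hx t ht hxn.2 hl htb)
    · push Not at hB
      rw [Finset.sum_eq_single_of_mem s hs]
      · exact hab s hs
      · intro x hx hxs
        exact hzero x hx (fun hl => haa x hx s hs hxs hl hsa) (not_lt.2 (hB x hx hxs))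
  · push Not at hA
    by_cases hB : ∃ t ∈ S, b t < h t
    · obtain ⟨t, ht, htb⟩ := hB
      rw [Finset.sum_eq_single_of_mem t ht]
      · exact hab t ht
      · intro x hx hxs
        exact hzero x hx (not_lt.2 (hA x hx)) (fun hl => hbb x hx t ht hxs hl htb)
    · push Not at hB
      rw [Finset.sum_eq_zero]
      · exact hC
      · intro x hx
        exact hzero x hx (not_lt.2 (hA x hx)) (not_lt.2 (hB x hx))

/-- truncated distance -/
noncomputable def pot {V : Type*} (G : SimpleGraph V) (c : Sym2 V → ℝ) (h : ℝ) (s u : V) : ℝ :=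
  ⨅ o : Option (G.Path s u), o.elim h (fun p => wc c p.1)

section
variable {V : Type*} [Fintype V] (G : SimpleGraph V) (c : Sym2 V → ℝ) (hc : ∀ e, 0 ≤ c e)

lemma pot_finite (s u : V) : Finite (Option (G.Path s u)) := by
  classical
  infer_instance

lemma pot_le_h (h : ℝ) (s u : V) : pot G c h s u ≤ h := by
  haveI := pot_finite G s u
  exact ciInf_le (Set.finite_range (fun o : Option (G.Path s u) => o.elim h (fun p => wc c p.1))).bddBelow none

lemma pot_attain (h : ℝ) (s u : V) (hlt : pot G c h s u < h) :
    ∃ p : G.Walk s u, pot G c h s u = wc c p := by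
  haveI := pot_finite G s u
  obtain ⟨o, ho⟩ := exists_eq_ciInf_of_finite (f := fun o : Option (G.Path s u) => o.elim h (fun p => wc c p.1))
  have ho' : pot G c h s u = o.elim h (fun p => wc c p.1) := ho.symm
  cases o with
  | none => simp at ho'; linarith
  | some p => exact ⟨p.1, by simpa using ho'⟩

include hc in
lemma pot_le_wc (h : ℝ) (s u : V) (p : G.Walk s u) : pot G c h s u ≤ wc c p := by
  haveI := pot_finite G s u
  obtain ⟨q, hq⟩ := exists_path_wc c hc p
  exact (ciInf_le (Set.finite_range (fun o : Option (G.Path s u) => o.elim h (fun p => wc c p.1))).bddBelow (some q)).trans hq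

include hc in
lemma pot_step (h : ℝ) (s u v : V) (huv : G.Adj u v) :
    pot G c h s v ≤ pot G c h s u + c s(u, v) := by
  by_cases hlt : pot G c h s u < h
  · obtain ⟨p, hp⟩ := pot_attain G c h s u hlt
    have := pot_le_wc G c hc h s v (p.append (SimpleGraph.Walk.cons huv SimpleGraph.Walk.nil))
    rw [wc_append, wc_cons, wc_nil] at this
    linarith
  · have := pot_le_h G c h s v
    have := hc s(u, v)
    linarith

include hc in
lemma pot_abs (h : ℝ) (s u v : V) (huv : G.Adj u v) :
    |pot G c h s u - pot G c h s v| ≤ c s(u, v) := by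
  have h1 := pot_step G c hc h s u v huv
  have h2 := pot_step G c hc h s v u huv.symm
  rw [Sym2.eq_swap] at h2
  rw [abs_le]; constructor <;> linarith

lemma sum_abs_walk (f : V → ℝ) {u v : V} (p : G.Walk u v) :
    f v - f u ≤ (p.edges.map (fun e => Sym2.lift ⟨fun a b => |f a - f b|, fun a b => abs_sub_comm _ _⟩ e)).sum := by
  induction p with
  | nil => simp
  | @cons a b d h p ih =>
    simp only [SimpleGraph.Walk.edges_cons, List.map_cons, List.sum_cons, Sym2.lift_mk]
    have := neg_le_abs (f a - f b)
    linarith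

open Classical in
include hc in
lemma nn (A : Set V) : ∃ d : V → ℝ, (∀ s, 0 ≤ d s) ∧
    (∀ s ∈ A, (∃ s' ∈ A, s' ≠ s ∧ G.Reachable s s') → ∃ s', ∃ p : G.Walk s s', s' ∈ A ∧ s' ≠ s ∧
      p.IsPath ∧ (∀ x ∈ p.support, x ∈ A → x = s ∨ x = s') ∧ wc c p ≤ d s) ∧
    ∑ s, d s ≤ 2 * ∑ e ∈ G.edgeFinset, c e := by
  let R : V → Prop := fun s => s ∈ A ∧ ∃ s' ∈ A, s' ≠ s ∧ G.Reachable s s'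
  have hnear : ∀ s : V, R s → ∃ s', ∃ p : G.Walk s s', s' ∈ A ∧ s' ≠ s ∧ p.IsPath ∧
      (∀ x ∈ p.support, x ∈ A → x = s ∨ x = s') ∧
      ∀ t ∈ A, t ≠ s → ∀ q : G.Walk s t, wc c p ≤ wc c q := fun s hs => nearest G c hc A s hs.2
  choose! e hE using hnear
  choose p hp1 hp2 hp3 hp4 hp5 using hE
  let d : V → ℝ := fun s => if h : R s then wc c (p s h) else 0
  have hd : ∀ s (h : R s), d s = wc c (p s h) := fun s h => dif_pos h
  have hd0 : ∀ s, 0 ≤ d s := by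
    intro s
    by_cases h : R s
    · rw [hd s h]; exact wc_nonneg c hc _
    · simp [d, h]
  refine ⟨d, hd0, ?_, ?_⟩
  · intro s hs hr
    have h : R s := ⟨hs, hr⟩
    exact ⟨e s, p s h, hp1 s h, hp2 s h, hp3 s h, hp4 s h, (hd s h).ge⟩
  · have hdw : ∀ s, R s → ∀ t ∈ A, t ≠ s → ∀ q : G.Walk s t, d s ≤ wc c q := by
      intro s h t ht hts q
      rw [hd s h]; exact hp5 s h t ht hts q
    let S : Finset V := Finset.univ.filter R
    have hS : ∀ s, s ∈ S ↔ R s := fun s => by simp [S]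
    let π : V → V → ℝ := fun s u => pot G c (d s / 2) s u
    let Δ : V → Sym2 V → ℝ := fun s =>
      Sym2.lift ⟨fun a b => |π s a - π s b|, fun a b => abs_sub_comm _ _⟩
    have hΔ0 : ∀ s e, 0 ≤ Δ s e := by
      intro s e
      induction e using Sym2.ind with
      | _ a b => exact abs_nonneg _
    have key : ∀ s ∈ S, ∀ t ∈ S, s ≠ t → ∀ u v (w : G.Walk u v), π s u < d s / 2 → π t v < d t / 2 →
        d s / 2 + d t / 2 ≤ π s u + π t v + wc c w := by
      intro s hs t ht hst u v w h1 h2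
      rw [hS] at hs ht
      obtain ⟨p1, e1⟩ := pot_attain G c _ s u h1
      obtain ⟨p2, e2⟩ := pot_attain G c _ t v h2
      have a1 := hdw s hs t ht.1 hst.symm (p1.append (w.append p2.reverse))
      have a2 := hdw t ht s hs.1 hst (p1.append (w.append p2.reverse)).reverse
      rw [wc_reverse] at a2
      rw [wc_append, wc_append, wc_reverse] at a1 a2
      have e1' : π s u = wc c p1 := e1
      have e2' : π t v = wc c p2 := e2
      linarith
    have hedge : ∀ e ∈ G.edgeFinset, ∑ s ∈ S, Δ s e ≤ c e := by
      intro e he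
      rw [SimpleGraph.mem_edgeFinset] at he
      induction e using Sym2.ind with
      | _ u v =>
        have huv : G.Adj u v := he
        have key0 : ∀ u, ∀ s ∈ S, ∀ t ∈ S, s ≠ t → π s u < d s / 2 → π t u < d t / 2 → False := by
          intro u s hs t ht hst h1 h2
          have := key s hs t ht hst u u SimpleGraph.Walk.nil h1 h2
          rw [wc_nil] at this
          linarith
        refine two_sum S (fun s => π s u) (fun s => π s v) (fun s => d s / 2) (c s(u, v)) (hc _)
          (fun s _ => pot_le_h G c _ s u) (fun s _ => pot_le_h G c _ s v)
          (fun s _ => pot_abs G c hc _ s u v huv) (key0 u) (key0 v) ?_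
        intro s hs t ht hst h1 h2
        have := key s hs t ht hst u v (SimpleGraph.Walk.cons huv SimpleGraph.Walk.nil) h1 h2
        rw [wc_cons, wc_nil] at this
        linarith
    have hhalf : ∀ s ∈ S, d s / 2 ≤ ∑ e ∈ G.edgeFinset, Δ s e := by
      intro s hs
      rw [hS] at hs
      have h1 : π s s ≤ 0 := by
        have := pot_le_wc G c hc (d s / 2) s s SimpleGraph.Walk.nil
        rwa [wc_nil] at this
      have h2 : d s / 2 ≤ π s (e s) := by
        by_contra hlt
        push Not at hlt
        obtain ⟨w, hw⟩ := pot_attain G c _ s (e s) hlt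
        have a1 := hdw s hs (e s) (hp1 s hs) (hp2 s hs) w
        have hw' : π s (e s) = wc c w := hw
        have := hd0 s
        linarith
      have h3 := sum_abs_walk G (π s) (p s hs)
      have h4 : ((p s hs).edges.map (Δ s)).sum = ∑ e ∈ (p s hs).edges.toFinset, Δ s e := by
        rw [List.sum_toFinset _ (hp3 s hs).isTrail.edges_nodup]
      have h5 : ∑ e ∈ (p s hs).edges.toFinset, Δ s e ≤ ∑ e ∈ G.edgeFinset, Δ s e := by
        apply Finset.sum_le_sum_of_subset_of_nonneg
        · intro x hx
          rw [List.mem_toFinset] at hx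
          rw [SimpleGraph.mem_edgeFinset]
          exact SimpleGraph.Walk.edges_subset_edgeSet _ hx
        · intro _ _ _; exact hΔ0 _ _
      have h3' : π s (e s) - π s s ≤ ((p s hs).edges.map (Δ s)).sum := h3
      linarith
    have hsum : ∑ s, d s = ∑ s ∈ S, d s := by
      symm
      apply Finset.sum_subset (Finset.subset_univ _)
      intro s _ hs
      rw [hS] at hs
      simp [d, hs]
    rw [hsum]
    have f1 := Finset.sum_le_sum hhalf
    rw [Finset.sum_comm] at f1
    have f2 := Finset.sum_le_sum hedge
    rw [← Finset.sum_div] at f1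
    linarith

end

lemma elemCost_le {V : Type*} [Fintype V] (G : SimpleGraph V) (c : Sym2 V → ℝ) (hc : ∀ e, 0 ≤ c e)
    (T : Set V) (r t : V) (k : ℕ) (K : SimpleGraph V) (hK : K ≤ G)
    (e : Fin k → V) (P : ∀ i, K.Walk t (e i)) (h1 : ∀ i, e i ∈ (T ∪ {r}) \ {t})
    (h2 : ∀ i, (P i).IsPath)
    (h3 : ∀ i j, i ≠ j → ∀ x, x ∈ (P i).support → x ∈ (P j).support → x = t ∨ (x = e i ∧ x = e j))
    (L : List (Sym2 V)) (hL : ∀ i, ∀ x ∈ (P i).edges, x ∈ L) :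
    elemCost G c T r t k ≤ (L.map c).sum := by
  classical
  let H : SimpleGraph V := K ⊓ SimpleGraph.fromEdgeSet {x | x ∈ L}
  have hH : H.edgeSet ⊆ {x | x ∈ L} := by
    intro x hx
    induction x using Sym2.ind with
    | _ a b =>
      have : H.Adj a b := hx
      simp only [H, SimpleGraph.inf_adj, SimpleGraph.fromEdgeSet_adj] at this
      exact this.2.1
  have hcost : cost c H ≤ (L.map c).sum := by
    unfold cost
    rw [finsum_mem_eq_finite_toFinset_sum _ (Set.toFinite _)]
    have : ∑ x ∈ (Set.toFinite H.edgeSet).toFinset, c x ≤ ∑ x ∈ L.toFinset, c x := by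
      apply Finset.sum_le_sum_of_subset_of_nonneg
      · intro x hx
        rw [Set.Finite.mem_toFinset] at hx
        rw [List.mem_toFinset]
        exact hH hx
      · intro _ _ _; exact hc _
    refine this.trans ?_
    have h5 : ∑ x ∈ L.toFinset, c x = (L.dedup.map c).sum := by
      rw [← List.sum_toFinset c (List.nodup_dedup L)]
      congr 1
      ext x; simp
    rw [h5]
    apply List.Sublist.sum_le_sum
    · exact (List.dedup_sublist L).map c
    · simp only [List.mem_map]
      rintro x ⟨e, _, rfl⟩
      exact hc e
  refine le_trans (csInf_le ?_ ⟨H, inf_le_left.trans hK, ?_, rfl⟩) hcost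
  · refine ⟨0, ?_⟩
    rintro x ⟨H', _, _, rfl⟩
    exact finsum_nonneg fun _ => finsum_nonneg fun _ => hc _
  · have hm : ∀ i, ∀ x ∈ (P i).edges, x ∈ H.edgeSet := by
      intro i x hx
      have g1 := hL i x hx
      have g2 := SimpleGraph.Walk.edges_subset_edgeSet _ hx
      induction x using Sym2.ind with
      | _ a b =>
        have g2' : K.Adj a b := g2
        show H.Adj a b
        simp only [H, SimpleGraph.inf_adj, SimpleGraph.fromEdgeSet_adj]
        exact ⟨g2', g1, g2'.ne⟩
    refine ⟨e, fun i => (P i).transfer H (hm i), h1, fun i => (h2 i).transfer (hm i), ?_⟩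
    intro i j hij x hx hy
    rw [SimpleGraph.Walk.support_transfer] at hx hy
    exact h3 i j hij x hx hy

lemma fan_cut {V : Type*} [Fintype V] (K : SimpleGraph V) (A : Set V) (k : ℕ) (a b : V)
    (ha : a ∈ A) (hb : b ∈ A) (hfan : HasFan K a b k) (U : Set V)
    (hU : (a ∈ U ∧ b ∉ U) ∨ (a ∉ U ∧ b ∈ U)) (hN : ∀ x ∈ nbd K U, x ∉ A) :
    k ≤ (nbd K U).ncard := by
  obtain ⟨P, hP, hd⟩ := hfan
  have hx : ∀ i, ∃ x ∈ nbd K U, x ∈ (P i).support := by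
    intro i
    rcases hU with ⟨h1, h2⟩ | ⟨h1, h2⟩
    · obtain ⟨d, hd, e1, e2⟩ := (P i).exists_boundary_dart U h1 h2
      exact ⟨d.snd, ⟨e2, d.fst, e1, d.adj⟩, SimpleGraph.Walk.dart_snd_mem_support_of_mem_darts _ hd⟩
    · obtain ⟨d, hd, e1, e2⟩ := (P i).exists_boundary_dart Uᶜ h1 (by simpa using h2)
      exact ⟨d.fst, ⟨e1, d.snd, by simpa using e2, d.adj.symm⟩,
        SimpleGraph.Walk.dart_fst_mem_support_of_mem_darts _ hd⟩
  choose f hf1 hf2 using hx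
  have hinj : Function.Injective f := by
    intro i j hij
    by_contra hne
    have := hd i j hne (f i) (hf2 i) (by rw [hij]; exact hf2 j)
    have hA := hN _ (hf1 i)
    rcases this with h | h
    · rw [h] at hA; exact hA ha
    · rw [h] at hA; exact hA hb
  have h1 : (Set.range f).ncard = k := by
    rw [← Set.image_univ, Set.ncard_image_of_injective _ hinj, Set.ncard_univ]
    simp
  rw [← h1]
  apply Set.ncard_le_ncard _ (Set.toFinite _)
  rintro _ ⟨i, rfl⟩
  exact hf1 i

lemma main_bound {V : Type*} [Fintype V]
    (G : SimpleGraph V) (c : Sym2 V → ℝ) (hc : ∀ e, 0 ≤ c e)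
    (r : V) (T : Set V) (k : ℕ)
    (K : SimpleGraph V) (hle : K ≤ G) (hgood : GoodFam K (T ∪ {r}) k) :
    ∑ᶠ t ∈ T, elemCost G c T r t k ≤ 2 * cost c K := by
  classical
  obtain ⟨Gr, g1, g2, g3, g4⟩ := hgood
  set A : Set V := T ∪ {r} with hA
  let GA : SimpleGraph V :=
    { Adj := fun a b => K.Adj a b ∧ a ∈ A ∧ b ∈ A
      symm := ⟨fun a b h => ⟨h.1.symm, h.2.2, h.2.1⟩⟩
      loopless := ⟨fun a h => K.loopless.irrefl a h.1⟩ }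
  let Q : Option V → SimpleGraph V := fun o => o.elim GA Gr
  have hQK : ∀ o, Q o ≤ K := by
    intro o
    cases o with
    | none => intro a b h; exact h.1
    | some i => exact g1 i
  have hnn := fun o => nn (Q o) c hc A
  choose d hd0 hd hdsum using hnn
  have hdisj : ∀ o o' a b, (Q o).Adj a b → (Q o').Adj a b → o = o' := by
    intro o o' a b h h'
    cases o with
    | none =>
      cases o' with
      | none => rfl
      | some j =>
        have h1 : GA.Adj a b := h
        rcases g2 j a b h' with hh | hh
        exacts [absurd h1.2.1 hh, absurd h1.2.2 hh]
    | some i =>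
      cases o' with
      | none =>
        have h1 : GA.Adj a b := h'
        rcases g2 i a b h with hh | hh
        exacts [absurd h1.2.1 hh, absurd h1.2.2 hh]
      | some j =>
        congr 1
        rcases g2 i a b h with hh | hh
        · exact g3 i j a b b hh h h'
        · exact g3 i j b a a hh (SimpleGraph.Adj.symm h) (SimpleGraph.Adj.symm h')
  have hcostK : cost c K = ∑ e ∈ K.edgeFinset, c e := by
    unfold cost
    rw [finsum_mem_eq_finite_toFinset_sum _ (Set.toFinite _)]
    congr 1
    ext x; simp
  have htot : ∑ o, ∑ e ∈ (Q o).edgeFinset, c e ≤ cost c K := by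
    rw [hcostK, ← Finset.sum_biUnion]
    · apply Finset.sum_le_sum_of_subset_of_nonneg
      · intro x hx
        simp only [Finset.mem_biUnion, Finset.mem_univ, true_and, SimpleGraph.mem_edgeFinset] at hx ⊢
        obtain ⟨o, ho⟩ := hx
        exact SimpleGraph.edgeSet_mono (hQK o) ho
      · intro _ _ _; exact hc _
    · intro o _ o' _ hne
      rw [Function.onFun, Finset.disjoint_left]
      intro x hx hx'
      rw [SimpleGraph.mem_edgeFinset] at hx hx'
      induction x using Sym2.ind with
      | _ a b => exact hne (hdisj o o' a b hx hx')
  have hmain : ∀ t ∈ T, elemCost G c T r t k ≤ ∑ o, d o t := by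
    intro t ht
    have htA : t ∈ A := Or.inl ht
    rcases g4 t htA with ⟨t', ht', hadj⟩ | hk
    · obtain ⟨s', p, hs'A, hs't, hp, hsup, hw⟩ := hd none t htA
        ⟨t', ht', hadj.ne.symm, SimpleGraph.Adj.reachable (show GA.Adj t t' from ⟨hadj, htA, ht'⟩)⟩
      have hall : ∀ x ∈ p.support, x = t ∨ x = s' := by
        intro x hx
        apply hsup x hx
        have hnil : ¬ p.Nil := SimpleGraph.Walk.not_nil_of_ne hs't.symm
        obtain ⟨y, _, hy⟩ := SimpleGraph.adj_of_mem_walk_support p hnil hx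
        have hy' : GA.Adj x y := hy
        exact hy'.2.1
      have := elemCost_le G c hc T r t k K hle (fun _ => s') (fun _ => p.mapLe (hQK none))
        (fun _ => ⟨hs'A, hs't⟩) (fun _ => (SimpleGraph.Walk.isPath_mapLe _).2 hp)
        (by
          intro i j _ x hx _
          rw [SimpleGraph.Walk.support_mapLe_eq_support] at hx
          rcases hall x hx with h | h
          · exact Or.inl h
          · exact Or.inr ⟨h, h⟩)
        p.edges (by
          intro i x hx
          rwa [SimpleGraph.Walk.edges_mapLe_eq_edges] at hx)
      refine this.trans (le_trans hw ?_)
      exact Finset.single_le_sum (f := fun o => d o t) (fun o _ => hd0 o t) (Finset.mem_univ none)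
    · obtain ⟨I, hI, hIk⟩ := Set.exists_subset_card_eq hk
      have hIfin : I.Finite := Set.toFinite _
      obtain ⟨f, hf, hfi⟩ : ∃ f : Fin k → V, (∀ i, f i ∈ I) ∧ Function.Injective f := by
        rw [Set.ncard_eq_toFinset_card _ hIfin] at hIk
        refine ⟨fun i => ((hIfin.toFinset.equivFinOfCardEq hIk).symm i).1, fun i => ?_, ?_⟩
        · have := ((hIfin.toFinset.equivFinOfCardEq hIk).symm i).2
          rwa [Set.Finite.mem_toFinset] at this
        · intro i j hij
          exact (hIfin.toFinset.equivFinOfCardEq hIk).symm.injective (Subtype.ext hij)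
      have hpath := fun i => hd (some (f i)) t htA (hI (hf i))
      choose e p he1 he2 hp hsup hw using hpath
      have hadj : ∀ i x, x ∈ (p i).support → ∃ y, (Gr (f i)).Adj x y := by
        intro i x hx
        have hnil : ¬ (p i).Nil := SimpleGraph.Walk.not_nil_of_ne (he2 i).symm
        obtain ⟨y, _, hy⟩ := SimpleGraph.adj_of_mem_walk_support (p i) hnil hx
        exact ⟨y, hy⟩
      have := elemCost_le G c hc T r t k K hle e (fun i => (p i).mapLe (hQK _))
        (fun i => ⟨he1 i, he2 i⟩) (fun i => (SimpleGraph.Walk.isPath_mapLe _).2 (hp i))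
        (by
          intro i j hij x hx hy
          rw [SimpleGraph.Walk.support_mapLe_eq_support] at hx hy
          by_cases hxA : x ∈ A
          · have q1 := hsup i x hx hxA
            have q2 := hsup j x hy hxA
            tauto
          · obtain ⟨y, hy1⟩ := hadj i x hx
            obtain ⟨z, hz1⟩ := hadj j x hy
            exact absurd (hfi (g3 _ _ x y z hxA hy1 hz1)) hij)
        ((List.finRange k).flatMap (fun i => (p i).edges)) (by
          intro i x hx
          rw [SimpleGraph.Walk.edges_mapLe_eq_edges] at hx
          rw [List.mem_flatMap]
          exact ⟨i, List.mem_finRange i, hx⟩)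
      refine this.trans ?_
      have hflat : ∀ l : List (Fin k), ((l.flatMap (fun i => (p i).edges)).map c).sum
          = (l.map (fun i => wc c (p i))).sum := by
        intro l
        induction l with
        | nil => simp
        | cons a l ih => simp only [List.flatMap_cons, List.map_append, List.sum_append, ih,
            List.map_cons, List.sum_cons, wc]
      rw [hflat]
      have hfr : ((List.finRange k).map (fun i => wc c (p i))).sum = ∑ i, wc c (p i) := by
        rw [← List.ofFn_eq_map, List.sum_ofFn]
      rw [hfr]
      refine (Finset.sum_le_sum (fun i _ => hw i)).trans ?_
      have : ∑ i, d (some (f i)) t = ∑ o ∈ Finset.univ.image (fun i => some (f i)), d o t := by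
        rw [Finset.sum_image]
        intro i _ j _ hij
        exact hfi (Option.some.inj hij)
      rw [this]
      exact Finset.sum_le_sum_of_subset_of_nonneg (Finset.subset_univ _) (fun o _ _ => hd0 o t)
  rw [finsum_mem_eq_finite_toFinset_sum _ (Set.toFinite T)]
  calc ∑ t ∈ (Set.toFinite T).toFinset, elemCost G c T r t k
      ≤ ∑ t ∈ (Set.toFinite T).toFinset, ∑ o, d o t :=
        Finset.sum_le_sum (fun t ht => hmain t (by rwa [Set.Finite.mem_toFinset] at ht))
    _ ≤ ∑ t, ∑ o, d o t := Finset.sum_le_sum_of_subset_of_nonneg (Finset.subset_univ _)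
        (fun t _ _ => Finset.sum_nonneg fun o _ => hd0 o t)
    _ = ∑ o, ∑ t, d o t := Finset.sum_comm
    _ ≤ ∑ o, 2 * ∑ e ∈ (Q o).edgeFinset, c e := Finset.sum_le_sum fun o _ => by
        convert hdsum o
    _ = 2 * ∑ o, ∑ e ∈ (Q o).edgeFinset, c e := by rw [Finset.mul_sum]
    _ ≤ 2 * cost c K := by linarith

/-- **Element-connectivity lemma (Chuzhoy–Khanna).** For any feasible solution `Hopt` of
the single-sink `k`-vertex-connectivity instance, `Σ_{t ∈ T} ElemCost(t) ≤ 2 · cost(Hopt)`;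
in particular the sum is at most `2 · OPT`. -/
theorem elem_cost_sum_le {V : Type*} [Fintype V]
    (G : SimpleGraph V) (c : Sym2 V → ℝ) (hc : ∀ e, 0 ≤ c e)
    (r : V) (T : Set V) (k : ℕ)
    (Hopt : SimpleGraph V) (hle : Hopt ≤ G)
    (hfeas : ∀ t ∈ T, HasFan Hopt t r k) :
    ∑ᶠ t ∈ T, elemCost G c T r t k ≤ 2 * cost c Hopt := by
  have hcost0 : 0 ≤ cost c Hopt := finsum_nonneg fun _ => finsum_nonneg fun _ => hc _
  by_cases hT : ∃ t ∈ T, t ≠ r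
  · apply main_bound G c hc r T k Hopt hle
    apply comb (T ∪ {r}) k _ Hopt le_rfl
    intro t ht U htU hUA hN
    obtain ⟨t0, ht0, hne⟩ := hT
    have hrA : r ∈ T ∪ {r} := Or.inr rfl
    by_cases htr : t = r
    · subst htr
      exact fan_cut Hopt _ k t0 t (Or.inl ht0) hrA (hfeas t0 ht0) U
        (Or.inr ⟨fun h => hne (hUA t0 h (Or.inl ht0)), htU⟩) hN
    · have htT : t ∈ T := by
        rcases ht with h | h
        · exact h
        · exact absurd h htr
      exact fan_cut Hopt _ k t r ht hrA (hfeas t htT) U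
        (Or.inl ⟨htU, fun h => htr (hUA r h hrA).symm⟩) hN
  · push Not at hT
    have hz : ∀ t ∈ T, elemCost G c T r t k ≤ 0 := by
      intro t ht
      have htr := hT t ht
      subst htr
      rcases Nat.eq_zero_or_pos k with rfl | hk
      · have := elemCost_le G c hc T t t 0 Hopt hle (fun i => i.elim0) (fun i => i.elim0)
          (fun i => i.elim0) (fun i => i.elim0) (fun i => i.elim0) [] (fun i => i.elim0)
        simpa using this
      · unfold elemCost
        have : {x | ∃ H : SimpleGraph V, H ≤ G ∧ HasElemFanTo H T t t k ∧ x = cost c H} = ∅ := by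
          rw [Set.eq_empty_iff_forall_notMem]
          rintro x ⟨H, _, ⟨e, P, he, _⟩, _⟩
          obtain ⟨h1, h2⟩ := he ⟨0, hk⟩
          rcases h1 with h1 | h1
          · exact h2 (hT _ h1)
          · exact h2 h1
        rw [this, Real.sInf_empty]
    rw [finsum_mem_eq_finite_toFinset_sum _ (Set.toFinite T)]
    have : ∑ t ∈ (Set.toFinite T).toFinset, elemCost G c T r t k ≤ 0 :=
      Finset.sum_nonpos fun t ht => hz t (by rwa [Set.Finite.mem_toFinset] at ht)
    linarith
end

section
/- Let G=(V,E) be an undirected graph of treewidth at most r−1 with terminal set T ⊆ V such that every pair of terminals is k-element-connected. Then G contains at least k/(12 r² log₂(3r)) pairwise element-disjoint Steiner trees spanning T. -/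
open SimpleGraph

/-- Two subgraphs, given as graphs on the same vertex set, are *element-disjoint* with
respect to the terminal set `T`: they share no edges and no non-terminal vertices. -/
def EDisj {V : Type*} (T : Set V) (H₁ H₂ : SimpleGraph V) : Prop :=
  Disjoint H₁.edgeSet H₂.edgeSet ∧ ∀ x, x ∈ H₁.support → x ∈ H₂.support → x ∈ T

/-- `H` is a Steiner tree of `G` for the terminal set `T`: a tree subgraph of `G`
containing all the terminals. -/
def IsSteinerTree {V : Type*} (G : SimpleGraph V) (T : Set V) (H : SimpleGraph V) : Prop :=
  H ≤ G ∧ H.IsAcyclic ∧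
    ∀ x ∈ H.support ∪ T, ∀ y ∈ H.support ∪ T, H.Reachable x y

/-- `H` is a Steiner forest of `G` for the terminal groups `T i`: a forest subgraph of
`G` in which each group lies entirely within a single tree of the forest. -/
def IsSteinerForest {V : Type*} {m : ℕ} (G : SimpleGraph V) (T : Fin m → Set V)
    (H : SimpleGraph V) : Prop :=
  H ≤ G ∧ H.IsAcyclic ∧ ∀ i, ∀ u ∈ T i, ∀ v ∈ T i, H.Reachable u v

/-- `G` has a tree decomposition in which every bag has at most `r` vertices,
i.e. `G` has treewidth at most `r - 1`. -/
def HasTreeDecompWidthLE {V : Type*} (G : SimpleGraph V) (r : ℕ) : Prop :=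
  ∃ (ι : Type) (Tr : SimpleGraph ι) (bag : ι → Set V),
    Tr.Connected ∧ Tr.IsAcyclic ∧
    (∀ v, ∃ i, v ∈ bag i) ∧
    (∀ u v, G.Adj u v → ∃ i, u ∈ bag i ∧ v ∈ bag i) ∧
    (∀ (x : V) (i j : ι), x ∈ bag i → x ∈ bag j →
      ∀ p : Tr.Walk i j, p.IsPath → ∀ y ∈ p.support, x ∈ bag y) ∧
    (∀ i, (bag i).ncard ≤ r)

/-! tree facts -/
def WConn {ι : Type*} (Tr : SimpleGraph ι) (B : Set ι) : Prop :=
  ∀ i ∈ B, ∀ j ∈ B, ∃ p : Tr.Walk i j, ∀ x ∈ p.support, x ∈ B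

def SubT {ι : Type*} (Tr : SimpleGraph ι) (ρ c : ι) : Set ι :=
  {i | ∀ p : Tr.Walk ρ i, c ∈ p.support}

lemma subT_cross {ι : Type*} {Tr : SimpleGraph ι} {ρ c : ι} {B : Set ι} (hB : WConn Tr B)
    {i j : ι} (hi : i ∈ B) (hj : j ∈ B) (hic : i ∈ SubT Tr ρ c) (hjc : j ∉ SubT Tr ρ c) :
    c ∈ B := by
  simp only [SubT, Set.mem_ofPred_eq, not_forall] at hjc hic
  obtain ⟨p, hp⟩ := hjc
  obtain ⟨w, hw⟩ := hB j hj i hi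
  have := hic (p.append w)
  rw [Walk.mem_support_append_iff] at this
  rcases this with h | h
  · exact absurd h hp
  · exact hw _ h

lemma subT_dist {ι : Type*} {Tr : SimpleGraph ι} (hc : Tr.Connected) {ρ c i : ι}
    (h : i ∈ SubT Tr ρ c) : Tr.dist ρ c < Tr.dist ρ i ∨ c = i := by
  classical
  obtain ⟨p, hp⟩ := hc.exists_walk_length_eq_dist ρ i
  have hm := h p
  by_cases hci : c = i
  · exact Or.inr hci
  left
  have h1 := congrArg Walk.length (p.take_spec hm)
  rw [Walk.length_append] at h1
  have h2 : Tr.dist ρ c ≤ _ := dist_le (p.takeUntil c hm)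
  have h3 : (p.dropUntil c hm).length ≠ 0 := fun h0 => hci (Walk.eq_of_length_eq_zero h0)
  omega

lemma exists_top {ι : Type*} {Tr : SimpleGraph ι} (hc : Tr.Connected) (ha : Tr.IsAcyclic) (ρ : ι)
    {B : Set ι} (hB : WConn Tr B) (hne : B.Nonempty) : ∃ c ∈ B, B ⊆ SubT Tr ρ c := by
  classical
  obtain ⟨c, hcB, hmin⟩ : ∃ c ∈ B, ∀ i ∈ B, Tr.dist ρ c ≤ Tr.dist ρ i := by
    have := exists_minimalFor_of_wellFoundedLT (fun i => i ∈ B) (fun i => Tr.dist ρ i) hne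
    obtain ⟨c, h1, h2⟩ := this
    exact ⟨c, h1, fun i hi => (le_total _ _).elim id (fun h => h2 hi h)⟩
  refine ⟨c, hcB, fun i hi w => ?_⟩
  obtain ⟨p, hpp, hp⟩ := hc.exists_path_of_dist ρ c
  obtain ⟨q0, hq0⟩ := hB c hcB i hi
  have hq : ∀ x ∈ q0.bypass.support, x ∈ B := fun x hx => hq0 x (q0.support_bypass_subset_support hx)
  have hpB : ∀ x ∈ p.support, x ∈ B → x = c := by
    intro x hx hxB
    by_contra hne
    have h1 := congrArg Walk.length (p.take_spec hx)
    rw [Walk.length_append] at h1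
    have h2 : Tr.dist ρ x ≤ _ := dist_le (p.takeUntil x hx)
    have h3 : (p.dropUntil x hx).length ≠ 0 := fun h0 => hne (Walk.eq_of_length_eq_zero h0)
    have := hmin x hxB
    omega
  have happ : (p.append q0.bypass).IsPath := by
    rw [Walk.isPath_def, Walk.support_append, List.nodup_append]
    refine ⟨hpp.support_nodup, (q0.bypass_isPath).support_nodup.tail, ?_⟩
    rintro a h1 b h2 rfl
    have hac := hpB a h1 (hq a (List.mem_of_mem_tail h2))
    subst hac
    have := (q0.bypass_isPath).support_nodup
    rw [← Walk.cons_tail_support] at this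
    exact (List.nodup_cons.1 this).1 h2
  have := (ha.subsingleton_path ρ i).elim ⟨_, happ⟩ ⟨w.bypass, w.bypass_isPath⟩
  have h4 : c ∈ (p.append q0.bypass).support := by
    rw [Walk.mem_support_append_iff]; left; exact p.end_mem_support
  have h5 : p.append q0.bypass = w.bypass := congrArg Subtype.val this
  rw [h5] at h4
  exact w.support_bypass_subset_support h4
/-! hypergraph packing -/
section Hyper
open Classical

def Crs {T Y : Type*} (N : Y → Finset T) (C : Set T) (y : Y) : Prop :=
  (∃ a ∈ N y, a ∈ C) ∧ (∃ b ∈ N y, b ∉ C)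

def Splits {T : Type*} (A : Finset T) (C : Set T) : Prop :=
  (∃ a ∈ A, a ∈ C) ∧ (∃ b ∈ A, b ∉ C)

noncomputable def KC {T Y : Type*} (A : Finset T) (F : Finset Y) (N : Y → Finset T) (k : ℕ) : Prop :=
  ∀ C : Set T, Splits A C → k ≤ (F.filter (Crs N C)).card

lemma small_conn {T Y : Type*} (S : Finset T) (F : Finset Y) (N : Y → Finset T)
    (hN : ∀ y ∈ F, N y ⊆ S) (h : KC S F N 1) :
    ∃ F0 ⊆ F, F0.card ≤ S.card ∧ KC S F0 N 1 := by
  rcases S.eq_empty_or_nonempty with rfl | ⟨s, hs⟩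
  · exact ⟨∅, by simp, by simp, fun C hC => by simp [Splits] at hC⟩
  have key : ∀ n, n + 1 ≤ S.card → ∃ C ⊆ S, ∃ F0 ⊆ F, C.Nonempty ∧ n + 1 ≤ C.card ∧ F0.card ≤ C.card ∧
      KC C F0 N 1 := by
    intro n
    induction n with
    | zero =>
      intro _
      refine ⟨{s}, by simpa using hs, ∅, by simp, by simp, by simp, by simp, fun C hC => ?_⟩
      simp [Splits] at hC
    | succ n ih =>
      intro hn
      obtain ⟨C, hCS, F0, hF0, hne, h1, h2, h3⟩ := ih (by omega)
      by_cases hc : C = S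
      · subst hc; exact ⟨C, hCS, F0, hF0, hne, hn, h2, h3⟩
      obtain ⟨b, hb, hbC⟩ : ∃ b ∈ S, b ∉ C := by
        by_contra hcon; push Not at hcon
        exact hc (Finset.Subset.antisymm hCS hcon)
      obtain ⟨a, ha⟩ := hne
      have := h (C : Set T) ⟨⟨a, hCS ha, by simpa using ha⟩, ⟨b, hb, by simpa using hbC⟩⟩
      obtain ⟨y, hy⟩ := Finset.card_pos.1 this
      rw [Finset.mem_filter] at hy
      obtain ⟨hyF, ⟨a', ha', haC⟩, ⟨b', hb', hbC'⟩⟩ := hy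
      have hlt : C.card + 1 ≤ (C ∪ N y).card := by
        apply Finset.card_lt_card
        rw [Finset.ssubset_iff_of_subset Finset.subset_union_left]
        exact ⟨b', Finset.mem_union_right _ hb', by simpa using hbC'⟩
      refine ⟨C ∪ N y, Finset.union_subset hCS (hN y hyF), insert y F0,
        Finset.insert_subset hyF hF0, ⟨a, Finset.mem_union_left _ ha⟩, by omega, ?_, ?_⟩
      · have := Finset.card_insert_le y F0; omega
      · intro D hD
        by_cases hs : Splits C D
        · refine (h3 D hs).trans (Finset.card_le_card ?_)
          exact Finset.filter_subset_filter _ (Finset.subset_insert _ _)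
        · apply Finset.card_pos.2
          refine ⟨y, Finset.mem_filter.2 ⟨Finset.mem_insert_self _ _, ?_⟩⟩
          have haC : a' ∈ C := by simpa using haC
          obtain ⟨⟨u, hu, huD⟩, ⟨v, hv, hvD⟩⟩ := hD
          have hs : (∀ a, ¬(a ∈ C ∧ a ∈ D)) ∨ (∀ a, ¬(a ∈ C ∧ a ∉ D)) := by
            rw [Splits, not_and_or] at hs; simpa only [not_exists] using hs
          rw [Finset.mem_union] at hu hv
          rcases hs with hs | hs
          · have ha'D : a' ∉ D := fun hx => hs a' ⟨haC, hx⟩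
            rcases hu with hu | hu
            · exact absurd ⟨hu, huD⟩ (hs u)
            · exact ⟨⟨u, hu, huD⟩, ⟨a', ha', ha'D⟩⟩
          · have ha'D : a' ∈ D := by by_contra hx; exact hs a' ⟨haC, hx⟩
            rcases hv with hv | hv
            · exact absurd ⟨hv, hvD⟩ (hs v)
            · exact ⟨⟨a', ha', ha'D⟩, ⟨v, hv, hvD⟩⟩
  have hpos : 1 ≤ S.card := Finset.card_pos.2 ⟨s, hs⟩
  obtain ⟨C, hCS, F0, hF0, hne, h1, h2, h3⟩ := key (S.card - 1) (by omega)
  have : C = S := Finset.eq_of_subset_of_card_le hCS (by omega)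
  subst this
  exact ⟨F0, hF0, h2, h3⟩

lemma greedy {T Y : Type*} (S : Finset T) (N : Y → Finset T) (q : ℕ) :
    ∀ F : Finset Y, (∀ y ∈ F, N y ⊆ S) → KC S F N (q * S.card) →
    ∃ P : Fin q → Finset Y, (∀ j, P j ⊆ F) ∧ (∀ i j, i ≠ j → Disjoint (P i) (P j)) ∧
      ∀ j, KC S (P j) N 1 := by
  induction q with
  | zero => intro F _ _; exact ⟨fun i => i.elim0, fun i => i.elim0, fun i => i.elim0, fun i => i.elim0⟩
  | succ q ih =>
    intro F hN h
    obtain ⟨F0, hF0, hc, hk⟩ := small_conn S F N hN (fun C hC => by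
      refine le_trans ?_ (h C hC)
      obtain ⟨⟨a, ha, _⟩, _⟩ := hC
      exact Nat.mul_pos (Nat.succ_pos _) (Finset.card_pos.2 ⟨a, ha⟩))
    obtain ⟨P, h1, h2, h3⟩ := ih (F \ F0) (fun y hy => hN y (Finset.sdiff_subset hy)) (fun C hC => by
      have := h C hC
      have h4 : (F.filter (Crs N C)).card ≤ ((F \ F0).filter (Crs N C)).card + F0.card := by
        refine le_trans (Finset.card_le_card (t := ((F \ F0).filter (Crs N C)) ∪ F0) ?_)
          (Finset.card_union_le _ _)
        intro y hy
        simp only [Finset.mem_filter, Finset.mem_union, Finset.mem_sdiff] at hy ⊢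
        tauto
      rw [Nat.succ_mul] at this
      omega)
    have hd : ∀ j, Disjoint F0 (P j) := fun j =>
      Finset.disjoint_of_subset_right (h1 j) Finset.disjoint_sdiff
    refine ⟨Fin.cons F0 P, ?_, ?_, ?_⟩
    · intro j
      refine Fin.cases ?_ (fun j => ?_) j
      · simpa using hF0
      · simpa using (h1 j).trans Finset.sdiff_subset
    · intro i j
      refine Fin.cases ?_ (fun i => ?_) i <;> refine Fin.cases ?_ (fun j => ?_) j
      · simp
      · intro _; simpa using hd j
      · intro _; simpa using (hd i).symm
      · intro hij; simpa using h2 i j (fun h => hij (by rw [h]))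
    · intro j
      refine Fin.cases ?_ (fun j => ?_) j
      · simpa using hk
      · simpa using h3 j

/-- the set S exists. -/
lemma find_S {T Y : Type*} (N : Y → Finset T) (SY U : Finset T) (hSY : SY ⊆ U) (hne : SY.Nonempty)
    (Fc : Finset Y) (r θ : ℕ) (hU : U.card ≤ r) (hFc : ∀ y ∈ Fc, N y ⊆ U)
    (hcut : ∀ S ⊆ SY, S.Nonempty → r * θ < (Fc.filter (Crs N (S : Set T))).card) :
    ∃ S ⊆ U, 2 ≤ S.card ∧ KC S (Fc.filter (fun y => N y ⊆ S ∧ (N y).Nonempty)) N (θ + 1) := by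
  let good : Finset T → Prop := fun S => S ⊆ U ∧ (S ∩ SY).Nonempty ∧
    (Fc.filter (Crs N (S : Set T))).card ≤ θ * (r - (S \ SY).card)
  have hgU : good U := by
    refine ⟨subset_rfl, ?_, ?_⟩
    · rwa [Finset.inter_eq_right.2 hSY]
    · rw [Finset.filter_false_of_mem]; · simp
      rintro y hy ⟨_, b, hb, hbU⟩
      exact hbU (by simpa using hFc y hy hb)
  obtain ⟨S, hS, hmin⟩ := exists_minimalFor_of_wellFoundedLT good Finset.card ⟨U, hgU⟩
  obtain ⟨hSU, hSn, hδ⟩ := hS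
  obtain ⟨x, hx⟩ : (S \ SY).Nonempty := by
    by_contra hcon
    rw [Finset.not_nonempty_iff_eq_empty] at hcon
    have h1 := hcut S (Finset.sdiff_eq_empty_iff_subset.1 hcon) (hSn.mono Finset.inter_subset_left)
    rw [hcon] at hδ
    simp only [Finset.card_empty, Nat.sub_zero] at hδ
    rw [mul_comm] at hδ
    omega
  rw [Finset.mem_sdiff] at hx
  obtain ⟨z, hz⟩ := hSn
  rw [Finset.mem_inter] at hz
  refine ⟨S, hSU, ?_, ?_⟩
  · apply Finset.one_lt_card.2
    exact ⟨x, hx.1, z, hz.1, fun h => hx.2 (h ▸ hz.2)⟩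
  have step : ∀ C : Set T, (∃ a ∈ S, a ∈ C ∧ a ∈ SY) → (∃ b ∈ S, b ∉ C ∧ b ∉ SY) →
      θ + 1 ≤ ((Fc.filter (fun y => N y ⊆ S ∧ (N y).Nonempty)).filter (Crs N C)).card := by
    rintro C ⟨a, haS, haC, haY⟩ ⟨b, hbS, hbC, hbY⟩
    by_contra hcon
    push Not at hcon
    have hlt : (S.filter (· ∈ C)).card < S.card := by
      apply Finset.card_lt_card
      rw [Finset.ssubset_iff_of_subset (Finset.filter_subset _ _)]
      exact ⟨b, hbS, by simp [hbC]⟩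
    have hg : good (S.filter (· ∈ C)) := by
      refine ⟨(Finset.filter_subset _ _).trans hSU, ⟨a, by simp [haS, haC, haY]⟩, ?_⟩
      have h1 : (S.filter (· ∈ C) \ SY).card + 1 ≤ (S \ SY).card := by
        apply Finset.card_lt_card
        rw [Finset.ssubset_iff_of_subset (Finset.sdiff_subset_sdiff (Finset.filter_subset _ _) subset_rfl)]
        exact ⟨b, by simp [hbS, hbY], by simp [hbC]⟩
      have h2 : (S \ SY).card ≤ r := (Finset.card_le_card (Finset.sdiff_subset.trans hSU)).trans hU
      have h3 : (Fc.filter (Crs N ((S.filter (· ∈ C) : Finset T) : Set T))).card ≤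
          (Fc.filter (Crs N (S : Set T))).card +
          ((Fc.filter (fun y => N y ⊆ S ∧ (N y).Nonempty)).filter (Crs N C)).card := by
        refine le_trans (Finset.card_le_card ?_) (Finset.card_union_le _ _)
        intro y hy
        rw [Finset.mem_filter] at hy
        obtain ⟨hyF, ⟨u, hu, huS⟩, ⟨v, hv, hvS⟩⟩ := hy
        simp only [Finset.coe_filter, Set.mem_ofPred_eq, not_and] at huS hvS
        rw [Finset.mem_union]
        by_cases hyS : N y ⊆ S
        · right
          simp only [Finset.mem_filter]
          exact ⟨⟨hyF, hyS, ⟨u, hu⟩⟩, ⟨u, hu, huS.2⟩, ⟨v, hv, hvS (hyS hv)⟩⟩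
        · left
          rw [Finset.not_subset] at hyS
          obtain ⟨w, hw, hwS⟩ := hyS
          exact Finset.mem_filter.2 ⟨hyF, ⟨u, hu, by simpa using huS.1⟩, ⟨w, hw, by simpa using hwS⟩⟩
      have h4 : θ * (r - (S \ SY).card) + θ = θ * (r - (S \ SY).card + 1) := by ring
      have h5 : θ * (r - (S \ SY).card + 1) ≤ θ * (r - (S.filter (· ∈ C) \ SY).card) :=
        Nat.mul_le_mul_left _ (by omega)
      omega
    have := hmin hg hlt.le
    omega
  have crs_compl : ∀ C : Set T, ∀ y, Crs N Cᶜ y ↔ Crs N C y := by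
    intro C y; simp only [Crs, Set.mem_compl_iff, not_not]; tauto
  have step' : ∀ C : Set T, (∃ a ∈ S, a ∉ C ∧ a ∈ SY) → (∃ b ∈ S, b ∈ C ∧ b ∉ SY) →
      θ + 1 ≤ ((Fc.filter (fun y => N y ⊆ S ∧ (N y).Nonempty)).filter (Crs N C)).card := by
    intro C h1 h2
    have := step Cᶜ h1 (by simpa using h2)
    simpa only [crs_compl] using this
  rintro C ⟨⟨a, haS, haC⟩, ⟨b, hbS, hbC⟩⟩
  by_cases haY : a ∈ SY <;> by_cases hbY : b ∈ SY
  · by_cases hxC : x ∈ C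
    · exact step' C ⟨b, hbS, hbC, hbY⟩ ⟨x, hx.1, hxC, hx.2⟩
    · exact step C ⟨a, haS, haC, haY⟩ ⟨x, hx.1, hxC, hx.2⟩
  · exact step C ⟨a, haS, haC, haY⟩ ⟨b, hbS, hbC, hbY⟩
  · exact step' C ⟨b, hbS, hbC, hbY⟩ ⟨a, haS, haC, haY⟩
  · by_cases hzC : z ∈ C
    · exact step C ⟨z, hz.1, hzC, hz.2⟩ ⟨b, hbS, hbC, hbY⟩
    · exact step' C ⟨z, hz.1, hzC, hz.2⟩ ⟨a, haS, haC, haY⟩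
end Hyper
section Hyper2
open Classical

lemma wconn_append {ι : Type*} {Tr : SimpleGraph ι} {Z : Set ι} {a b c : ι}
    (h1 : ∃ p : Tr.Walk a b, ∀ x ∈ p.support, x ∈ Z) (h2 : ∃ p : Tr.Walk b c, ∀ x ∈ p.support, x ∈ Z) :
    ∃ p : Tr.Walk a c, ∀ x ∈ p.support, x ∈ Z := by
  obtain ⟨p, hp⟩ := h1
  obtain ⟨q, hq⟩ := h2
  refine ⟨p.append q, fun x hx => ?_⟩
  rw [Walk.mem_support_append_iff] at hx
  exact hx.elim (hp x) (hq x)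

lemma wconn_symm {ι : Type*} {Tr : SimpleGraph ι} {Z : Set ι} {a b : ι}
    (h1 : ∃ p : Tr.Walk a b, ∀ x ∈ p.support, x ∈ Z) :
    ∃ p : Tr.Walk b a, ∀ x ∈ p.support, x ∈ Z := by
  obtain ⟨p, hp⟩ := h1
  exact ⟨p.reverse, fun x hx => hp x (by simpa using hx)⟩

/-- union of the subtrees of a connected hypergraph is connected -/
lemma wconn_union {ι T Y : Type*} {Tr : SimpleGraph ι} (S : Finset T) (F : Finset Y) (N : Y → Finset T)
    (BT : T → Set ι) (BY : Y → Set ι) (hBT : ∀ t ∈ S, WConn Tr (BT t))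
    (hBY : ∀ y ∈ F, WConn Tr (BY y)) (hne : ∀ y ∈ F, (N y).Nonempty) (hNS : ∀ y ∈ F, N y ⊆ S)
    (hm : ∀ y ∈ F, ∀ t ∈ N y, (BT t ∩ BY y).Nonempty) (h : KC S F N 1) :
    WConn Tr {i | (∃ t ∈ S, i ∈ BT t) ∨ ∃ y ∈ F, i ∈ BY y} := by
  set Z : Set ι := {i | (∃ t ∈ S, i ∈ BT t) ∨ ∃ y ∈ F, i ∈ BY y} with hZ
  have hT : ∀ t ∈ S, BT t ⊆ Z := fun t ht i hi => Or.inl ⟨t, ht, hi⟩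
  have hY : ∀ y ∈ F, BY y ⊆ Z := fun t ht i hi => Or.inr ⟨t, ht, hi⟩
  have inT : ∀ t ∈ S, ∀ i ∈ BT t, ∀ j ∈ BT t, ∃ p : Tr.Walk i j, ∀ x ∈ p.support, x ∈ Z :=
    fun t ht i hi j hj => (hBT t ht i hi j hj).imp (fun p hp x hx => hT t ht (hp x hx))
  have inY : ∀ t ∈ F, ∀ i ∈ BY t, ∀ j ∈ BY t, ∃ p : Tr.Walk i j, ∀ x ∈ p.support, x ∈ Z :=
    fun t ht i hi j hj => (hBY t ht i hi j hj).imp (fun p hp x hx => hY t ht (hp x hx))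
  -- from every point of Z reach some BT
  have toT : ∀ i ∈ Z, ∃ t ∈ S, ∃ j ∈ BT t, ∃ p : Tr.Walk i j, ∀ x ∈ p.support, x ∈ Z := by
    rintro i (⟨t, ht, hi⟩ | ⟨y, hy, hi⟩)
    · exact ⟨t, ht, i, hi, inT t ht i hi i hi⟩
    · obtain ⟨t, ht⟩ := hne y hy
      obtain ⟨j, hj1, hj2⟩ := hm y hy t ht
      exact ⟨t, hNS y hy ht, j, hj1, inY y hy i hi j hj2⟩
  have main : ∀ t ∈ S, ∀ i ∈ BT t, ∀ t' ∈ S, ∀ j ∈ BT t', ∃ p : Tr.Walk i j, ∀ x ∈ p.support, x ∈ Z := by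
    intro t ht i hi
    by_contra hcon
    push Not at hcon
    obtain ⟨t', ht', j, hj, hno⟩ := hcon
    let C : Set T := {u | ∀ j ∈ BT u, ∃ p : Tr.Walk i j, ∀ x ∈ p.support, x ∈ Z}
    have hsp : Splits S C := by
      refine ⟨⟨t, ht, fun j hj => inT t ht i hi j hj⟩, ⟨t', ht', fun hx => ?_⟩⟩
      obtain ⟨p, hp⟩ := hx j hj
      obtain ⟨x, hx1, hx2⟩ := hno p
      exact hx2 (hp x hx1)
    obtain ⟨y, hy⟩ := Finset.card_pos.1 (h C hsp)
    rw [Finset.mem_filter] at hy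
    obtain ⟨hyF, ⟨a, ha, haC⟩, ⟨b, hb, hbC⟩⟩ := hy
    obtain ⟨u, hu1, hu2⟩ := hm y hyF a ha
    obtain ⟨v, hv1, hv2⟩ := hm y hyF b hb
    refine hbC (fun j hj => ?_)
    exact wconn_append (haC u hu1) (wconn_append (inY y hyF u hu2 v hv2)
      (inT b (hNS y hyF hb) v hv1 j hj))
  intro i hi j hj
  obtain ⟨t, ht, i', hi', hw⟩ := toT i hi
  obtain ⟨t', ht', j', hj', hw'⟩ := toT j hj
  exact wconn_append hw (wconn_append (main t ht i' hi' t' ht' j' hj') (wconn_symm hw'))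

theorem hyper_pack {ι T Y : Type*} (Tr : SimpleGraph ι) (hc : Tr.Connected) (hac : Tr.IsAcyclic)
    (ρ : ι) (r q k : ℕ) (hr : 1 ≤ r) (hq : 1 ≤ q) (hk : r * (q * r) + r ≤ k) (n : ℕ) :
    ∀ (A : Finset T) (F : Finset Y) (N : Y → Finset T) (BT : T → Set ι) (BY : Y → Set ι),
    A.card ≤ n → (∀ y ∈ F, N y ⊆ A) → KC A F N k →
    (∀ t ∈ A, WConn Tr (BT t)) → (∀ t ∈ A, (BT t).Nonempty) → (∀ y ∈ F, WConn Tr (BY y)) →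
    (∀ y ∈ F, ∀ t ∈ N y, (BT t ∩ BY y).Nonempty) →
    (∀ i, (A.filter (fun t => i ∈ BT t)).card +
      (F.filter (fun y => i ∈ BY y ∧ (BY y).Nontrivial)).card ≤ r) →
    ∃ P : Fin q → Finset Y, (∀ j, P j ⊆ F) ∧ (∀ i j, i ≠ j → Disjoint (P i) (P j)) ∧
      ∀ j, KC A (P j) N 1 := by
  have hqr : 1 ≤ q * r := Nat.mul_pos hq hr
  induction n with
  | zero =>
    intro A F N BT BY hA hN hKC _ _ _ _ _
    have : A = ∅ := Finset.card_eq_zero.1 (by omega)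
    subst this
    exact ⟨fun _ => ∅, by simp, by simp, fun j C hC => by simp [Splits] at hC⟩
  | succ n ih =>
    intro A F N BT BY hA hN hKC hBT hBTn hBY hm hbag
    by_cases hAr : A.card ≤ r
    · apply greedy A N q F hN
      intro C hC
      refine le_trans ?_ (hKC C hC)
      have h1 : q * A.card ≤ q * r := Nat.mul_le_mul_left _ hAr
      have h2 : 1 * (q * r) ≤ r * (q * r) := Nat.mul_le_mul_right _ hr
      omega
    push Not at hAr
    have htop : ∀ t, ∃ c, t ∈ A → c ∈ BT t ∧ BT t ⊆ SubT Tr ρ c := by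
      intro t
      by_cases ht : t ∈ A
      · obtain ⟨c, h1, h2⟩ := exists_top hc hac ρ (hBT t ht) (hBTn t ht)
        exact ⟨c, fun _ => ⟨h1, h2⟩⟩
      · exact ⟨ρ, fun h => absurd h ht⟩
    choose τ hτ using htop
    obtain ⟨t0, ht0, hmax⟩ := Finset.exists_max_image A (fun t => Tr.dist ρ (τ t))
      (Finset.card_pos.1 (by omega))
    set c := τ t0 with hcdef
    set sub := SubT Tr ρ c with hsub
    have hSYc : ∀ t ∈ A, BT t ⊆ sub → c ∈ BT t := by
      intro t ht hs
      have h1 := hτ t ht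
      rcases subT_dist hc (hs h1.1) with h | h
      · have := hmax t ht; omega
      · rw [h]; exact h1.1
    have hUc : ∀ t ∈ A, (∃ i ∈ BT t, i ∈ sub) → c ∈ BT t := by
      rintro t ht ⟨i, hi, his⟩
      by_cases hs : BT t ⊆ sub
      · exact hSYc t ht hs
      · rw [Set.not_subset] at hs
        obtain ⟨j, hj, hjs⟩ := hs
        exact subT_cross (hBT t ht) hi hj his hjs
    set SY := A.filter (fun t => BT t ⊆ sub) with hSY
    set U := A.filter (fun t => ∃ i ∈ BT t, i ∈ sub) with hU
    set Fc := F.filter (fun y => BY y ⊆ sub) with hFc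
    have hUr : U.card ≤ r := by
      refine le_trans (Finset.card_le_card ?_) ((Nat.le_add_right _ _).trans (hbag c))
      intro t ht
      rw [hU, Finset.mem_filter] at ht
      exact Finset.mem_filter.2 ⟨ht.1, hUc t ht.1 ht.2⟩
    have hSYU : SY ⊆ U := by
      intro t ht
      rw [hSY, Finset.mem_filter] at ht
      obtain ⟨i, hi⟩ := hBTn t ht.1
      exact Finset.mem_filter.2 ⟨ht.1, i, hi, ht.2 hi⟩
    have hFcU : ∀ y ∈ Fc, N y ⊆ U := by
      intro y hy t ht
      rw [hFc, Finset.mem_filter] at hy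
      obtain ⟨i, hi1, hi2⟩ := hm y hy.1 t ht
      exact Finset.mem_filter.2 ⟨hN y hy.1 ht, i, hi1, hy.2 hi2⟩
    obtain ⟨S, hSU, hS2, hSK⟩ := find_S N SY U hSYU
      ⟨t0, Finset.mem_filter.2 ⟨ht0, (hτ t0 ht0).2⟩⟩ Fc r (q * r - 1) hUr hFcU (by
        intro S hS hSn
        have hSA : Splits A (S : Set T) := by
          obtain ⟨s, hs⟩ := hSn
          refine ⟨⟨s, (Finset.mem_filter.1 (hS hs)).1, by simpa using hs⟩, ?_⟩
          by_contra hcon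
          push Not at hcon
          have : A.card ≤ S.card := Finset.card_le_card (fun x hx => by simpa using hcon x hx)
          have h2 := Finset.card_le_card (hS.trans hSYU)
          omega
        have h1 := hKC _ hSA
        have h2 : (F.filter (Crs N (S : Set T))).card ≤ (Fc.filter (Crs N (S : Set T))).card + r := by
          refine le_trans (Finset.card_le_card (t := (Fc.filter (Crs N (S : Set T))) ∪
            (F.filter (fun y => c ∈ BY y ∧ (BY y).Nontrivial))) ?_)
            ((Finset.card_union_le _ _).trans (Nat.add_le_add_left
              ((Nat.le_add_left _ _).trans (hbag c)) _))
          intro y hy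
          rw [Finset.mem_filter] at hy
          rw [Finset.mem_union]
          by_cases hys : BY y ⊆ sub
          · left; exact Finset.mem_filter.2 ⟨Finset.mem_filter.2 ⟨hy.1, hys⟩, hy.2⟩
          · right
            rw [Set.not_subset] at hys
            obtain ⟨j, hj, hjs⟩ := hys
            obtain ⟨a, ha, haS⟩ := hy.2.1
            obtain ⟨i, hi1, hi2⟩ := hm y hy.1 a ha
            have his : i ∈ sub := (Finset.mem_filter.1 (hS (by simpa using haS))).2 hi1
            exact Finset.mem_filter.2 ⟨hy.1, subT_cross (hBY y hy.1) hi2 hj his hjs,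
              i, hi2, j, hj, fun h => hjs (h ▸ his)⟩
        have h3 : r * (q * r - 1) + r = r * (q * r) := by
          obtain ⟨m, hm⟩ : ∃ m, q * r = m + 1 := ⟨q * r - 1, by omega⟩
          rw [hm, Nat.add_sub_cancel]; ring
        omega)
    set FS := Fc.filter (fun y => N y ⊆ S ∧ (N y).Nonempty) with hFS
    have hFSF : FS ⊆ F := (Finset.filter_subset _ _).trans (Finset.filter_subset _ _)
    have hFSS : ∀ y ∈ FS, N y ⊆ S := fun y hy => (Finset.mem_filter.1 hy).2.1
    have hFSn : ∀ y ∈ FS, (N y).Nonempty := fun y hy => (Finset.mem_filter.1 hy).2.2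
    have hSA : S ⊆ A := hSU.trans (Finset.filter_subset _ _)
    have hSr : S.card ≤ r := (Finset.card_le_card hSU).trans hUr
    obtain ⟨Q, hQ1, hQ2, hQ3⟩ := greedy S N q FS hFSS (by
      intro C hC
      refine le_trans ?_ (hSK C hC)
      have h1 : q * S.card ≤ q * r := Nat.mul_le_mul_left _ hSr
      omega)
    obtain ⟨s0, hs0, s1, hs1, hs01⟩ := Finset.one_lt_card.1 hS2
    set κ : T → T := fun t => if t ∈ S then s0 else t with hκ
    have κS : ∀ t ∈ S, κ t = s0 := fun t ht => by simp [hκ, ht]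
    have κn : ∀ t, t ∉ S → κ t = t := fun t ht => by simp [hκ, ht]
    set Z : Set ι := {i | (∃ t ∈ S, i ∈ BT t) ∨ ∃ y ∈ FS, i ∈ BY y} with hZ
    have hZc : WConn Tr Z := wconn_union S FS N BT BY (fun t ht => hBT t (hSA ht))
      (fun y hy => hBY y (hFSF hy)) hFSn hFSS (fun y hy => hm y (hFSF hy))
      (fun C hC => le_trans (by omega) (hSK C hC))
    have memA' : ∀ t, t ∈ A.image κ ↔ t = s0 ∨ (t ∈ A ∧ t ∉ S) := by
      intro t
      rw [Finset.mem_image]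
      constructor
      · rintro ⟨u, hu, rfl⟩
        by_cases huS : u ∈ S
        · left; exact κS u huS
        · right; rw [κn u huS]; exact ⟨hu, huS⟩
      · rintro (rfl | ⟨h1, h2⟩)
        · exact ⟨t, hSA hs0, κS _ hs0⟩
        · exact ⟨t, h1, κn t h2⟩
    set BT' : T → Set ι := fun t => if t = s0 then Z else BT t with hBT'
    have hBTle : ∀ t ∈ A, BT t ⊆ BT' (κ t) := by
      intro t ht
      by_cases hts : t ∈ S
      · rw [κS t hts]; intro i hi; simp only [hBT', if_true]; exact Or.inl ⟨t, hts, hi⟩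
      · have : t ≠ s0 := fun h => hts (h ▸ hs0)
        rw [κn t hts]; simp [hBT', this]
    have crsκ : ∀ C : Set T, ∀ y, Crs (fun y => (N y).image κ) C y ↔ Crs N (κ ⁻¹' C) y := by
      intro C y; simp [Crs]
    obtain ⟨P, hP1, hP2, hP3⟩ := ih (A.image κ) (F \ FS) (fun y => (N y).image κ) BT' BY
      (by
        have : A.image κ ⊆ A.erase s1 := by
          intro t ht
          rw [memA'] at ht
          rw [Finset.mem_erase]
          rcases ht with rfl | ⟨h1, h2⟩
          · exact ⟨hs01, hSA hs0⟩
          · exact ⟨fun h => h2 (h ▸ hs1), h1⟩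
        have h1 := Finset.card_le_card this
        rw [Finset.card_erase_of_mem (hSA hs1)] at h1
        omega)
      (fun y hy => Finset.image_subset_image (hN y (Finset.sdiff_subset hy)))
      (by
        rintro C ⟨⟨a, ha, haC⟩, ⟨b, hb, hbC⟩⟩
        rw [Finset.mem_image] at ha hb
        obtain ⟨a', ha', rfl⟩ := ha
        obtain ⟨b', hb', rfl⟩ := hb
        refine (hKC (κ ⁻¹' C) ⟨⟨a', ha', haC⟩, ⟨b', hb', hbC⟩⟩).trans (Finset.card_le_card ?_)
        intro y hy
        rw [Finset.mem_filter] at hy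
        rw [Finset.mem_filter, Finset.mem_sdiff, crsκ]
        refine ⟨⟨hy.1, fun hyS => ?_⟩, hy.2⟩
        obtain ⟨⟨u, hu, huC⟩, ⟨v, hv, hvC⟩⟩ := hy.2
        rw [Set.mem_preimage, κS _ (hFSS y hyS hu)] at huC
        rw [Set.mem_preimage, κS _ (hFSS y hyS hv)] at hvC
        exact hvC huC)
      (by
        intro t ht
        by_cases h : t = s0
        · simpa [hBT', h] using hZc
        · rw [memA'] at ht
          simpa [hBT', h] using hBT t (ht.resolve_left h).1)
      (by
        intro t ht
        rw [Finset.mem_image] at ht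
        obtain ⟨u, hu, rfl⟩ := ht
        exact (hBTn u hu).mono (hBTle u hu))
      (fun y hy => hBY y (Finset.sdiff_subset hy))
      (by
        intro y hy t ht
        rw [Finset.mem_image] at ht
        obtain ⟨u, hu, rfl⟩ := ht
        have hyF := Finset.sdiff_subset hy
        exact (hm y hyF u hu).mono (Set.inter_subset_inter_left _ (hBTle u (hN y hyF hu))))
      (by
        intro i
        refine le_trans ?_ (hbag i)
        have hF' : (F \ FS).filter (fun y => i ∈ BY y ∧ (BY y).Nontrivial) ⊆
          F.filter (fun y => i ∈ BY y ∧ (BY y).Nontrivial) :=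
          Finset.filter_subset_filter _ Finset.sdiff_subset
        have hF'' := Finset.card_le_card hF'
        have hA' : (A.image κ).filter (fun t => i ∈ BT' t) ⊆
            insert s0 ((A.filter (fun t => i ∈ BT t)) \ S) := by
          intro t ht
          rw [Finset.mem_filter, memA'] at ht
          rw [Finset.mem_insert, Finset.mem_sdiff, Finset.mem_filter]
          by_cases h : t = s0
          · exact Or.inl h
          · right
            have h1 := ht.1.resolve_left h
            have h2 := ht.2
            simp only [hBT', h, if_false] at h2
            exact ⟨⟨h1.1, h2⟩, h1.2⟩
        have hA'' := (Finset.card_le_card hA').trans (Finset.card_insert_le _ _)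
        have hA3 := Finset.card_le_card (Finset.sdiff_subset (s := A.filter (fun t => i ∈ BT t)) (t := S))
        by_cases h1 : ∃ t ∈ S, i ∈ BT t
        · obtain ⟨t, ht, hi⟩ := h1
          have : ((A.filter (fun t => i ∈ BT t)) \ S).card < (A.filter (fun t => i ∈ BT t)).card := by
            apply Finset.card_lt_card
            rw [Finset.ssubset_iff_of_subset Finset.sdiff_subset]
            exact ⟨t, Finset.mem_filter.2 ⟨hSA ht, hi⟩, fun h => (Finset.mem_sdiff.1 h).2 ht⟩
          omega
        by_cases h2 : ∃ y ∈ FS, i ∈ BY y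
        · obtain ⟨y, hy, hi⟩ := h2
          have hnt : (BY y).Nontrivial := by
            by_contra hcon
            rw [Set.not_nontrivial_iff] at hcon
            obtain ⟨t, ht⟩ := hFSn y hy
            obtain ⟨j, hj1, hj2⟩ := hm y (hFSF hy) t ht
            have := hcon hi hj2
            subst this
            exact h1 ⟨t, hFSS y hy ht, hj1⟩
          have : ((F \ FS).filter (fun y => i ∈ BY y ∧ (BY y).Nontrivial)).card <
              (F.filter (fun y => i ∈ BY y ∧ (BY y).Nontrivial)).card := by
            apply Finset.card_lt_card
            rw [Finset.ssubset_iff_of_subset hF']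
            refine ⟨y, Finset.mem_filter.2 ⟨hFSF hy, hi, hnt⟩, fun h => ?_⟩
            exact (Finset.mem_sdiff.1 (Finset.mem_filter.1 h).1).2 hy
          omega
        · have hA4 : (A.image κ).filter (fun t => i ∈ BT' t) ⊆ A.filter (fun t => i ∈ BT t) := by
            intro t ht
            have h3 := hA' ht
            rw [Finset.mem_insert] at h3
            rcases h3 with rfl | h3
            · exfalso
              have := (Finset.mem_filter.1 ht).2
              simp only [hBT', if_true] at this
              exact this.elim h1 h2
            · exact Finset.sdiff_subset h3
          have := Finset.card_le_card hA4
          omega)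
    refine ⟨fun j => P j ∪ Q j, fun j => Finset.union_subset ((hP1 j).trans Finset.sdiff_subset)
      ((hQ1 j).trans hFSF), ?_, ?_⟩
    · intro i j hij
      have hd : ∀ i j, Disjoint (P i) (Q j) := fun i j =>
        Finset.disjoint_of_subset_left (hP1 i) (Finset.disjoint_of_subset_right (hQ1 j)
          Finset.sdiff_disjoint)
      rw [Finset.disjoint_union_left, Finset.disjoint_union_right, Finset.disjoint_union_right]
      exact ⟨⟨hP2 i j hij, hd i j⟩, ⟨(hd j i).symm, hQ2 i j hij⟩⟩
    · intro j C hC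
      by_cases hsp : Splits S C
      · refine (hQ3 j C hsp).trans (Finset.card_le_card ?_)
        exact Finset.filter_subset_filter _ Finset.subset_union_right
      · have hSC : ∀ t ∈ S, (t ∈ C ↔ s0 ∈ C) := by
          intro t ht
          by_contra hcon
          apply hsp
          by_cases h : s0 ∈ C
          · exact ⟨⟨s0, hs0, h⟩, ⟨t, ht, fun h' => hcon (by simp [h, h'])⟩⟩
          · exact ⟨⟨t, ht, by by_contra h'; exact hcon (by simp [h, h'])⟩, ⟨s0, hs0, h⟩⟩
        have hpre : κ ⁻¹' C = C := by
          ext t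
          rw [Set.mem_preimage]
          by_cases ht : t ∈ S
          · rw [κS t ht, hSC t ht]
          · rw [κn t ht]
        have hsp' : Splits (A.image κ) C := by
          obtain ⟨⟨a, ha, haC⟩, ⟨b, hb, hbC⟩⟩ := hC
          refine ⟨⟨κ a, Finset.mem_image_of_mem _ ha, ?_⟩, ⟨κ b, Finset.mem_image_of_mem _ hb, ?_⟩⟩
          · rw [← Set.mem_preimage, hpre]; exact haC
          · rw [← Set.mem_preimage, hpre]; exact hbC
        refine (hP3 j C hsp').trans (Finset.card_le_card ?_)
        intro y hy
        rw [Finset.mem_filter, crsκ, hpre] at hy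
        exact Finset.mem_filter.2 ⟨Finset.mem_union_left _ hy.1, hy.2⟩
end Hyper2
section Reduce
open Classical

structure Lab {α E : Type*} (inc : E → Set α) (L : List (E × E)) (φ : E → E)
    (ℓ : α → ℤ) (m : E → ℤ) : Prop where
  hℓ : ∀ a, ℓ a = 1 ∨ ℓ a = -1
  hm : ∀ e, -1 ≤ m e ∧ m e ≤ 1
  hinc : ∀ e, ∀ a ∈ inc e, m (φ e) - ℓ a ≤ 1 ∧ ℓ a - m (φ e) ≤ 1
  hL : ∀ x ∈ L, m (φ x.1) - m (φ x.2) ≤ 1 ∧ m (φ x.2) - m (φ x.1) ≤ 1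

noncomputable def zc {E : Type*} [Fintype E] (φ : E → E) (m : E → ℤ) : ℕ :=
  ((Finset.univ.image φ).filter (fun y => m y = 0)).card

def KL {α E : Type*} [Fintype E] (inc : E → Set α) (L : List (E × E)) (φ : E → E) (k : ℕ) : Prop :=
  ∀ ℓ m, Lab inc L φ ℓ m → (∃ a, ℓ a = 1) → (∃ a, ℓ a = -1) → k ≤ zc φ m

lemma Lab.neg {α E : Type*} {inc : E → Set α} {L : List (E × E)} {φ : E → E}
    {ℓ : α → ℤ} {m : E → ℤ} (h : Lab inc L φ ℓ m) : Lab inc L φ (-ℓ) (-m) where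
  hℓ a := by have := h.hℓ a; simp only [Pi.neg_apply]; omega
  hm e := by have := h.hm e; simp only [Pi.neg_apply]; omega
  hinc e a ha := by have := h.hinc e a ha; simp only [Pi.neg_apply]; omega
  hL x hx := by have := h.hL x hx; simp only [Pi.neg_apply]; omega

lemma zc_neg {E : Type*} [Fintype E] (φ : E → E) (m : E → ℤ) : zc φ (-m) = zc φ m := by
  simp [zc]

lemma zc_mod {E : Type*} [Fintype E] (φ : E → E) (m m' : E → ℤ) :
    zc φ (fun e => min (m e) (m' e)) + zc φ (fun e => max (m e) (m' e)) = zc φ m + zc φ m' := by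
  simp only [zc, Finset.card_filter, ← Finset.sum_add_distrib]
  apply Finset.sum_congr rfl
  intro e _
  rcases le_total (m e) (m' e) with h | h
  · rw [min_eq_left h, max_eq_right h]
  · rw [min_eq_right h, max_eq_left h, add_comm]

lemma uncross_s16 {α E : Type*} [Fintype E] {inc : E → Set α} {L : List (E × E)} {φ : E → E} {k : ℕ}
    {p q : E} (hK : KL inc ((p, q) :: L) φ k) {ℓ ℓ' : α → ℤ} {m m' : E → ℤ}
    (h : Lab inc L φ ℓ m) (h' : Lab inc L φ ℓ' m') (hp : m' (φ p) = 0) (hq : m' (φ q) = 0)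
    (h1 : ∃ a, ℓ a = 1 ∧ ℓ' a = 1) (h2 : ∃ a, ℓ a = -1 ∧ ℓ' a = -1) :
    2 * k ≤ zc φ m + zc φ m' := by
  obtain ⟨a, ha, ha'⟩ := h1
  obtain ⟨b, hb, hb'⟩ := h2
  rw [← zc_mod]
  have hP := h.hm (φ p)
  have hQ := h.hm (φ q)
  have e1 := hK (fun a => min (ℓ a) (ℓ' a)) (fun e => min (m e) (m' e)) ⟨
    fun a => by have := h.hℓ a; have := h'.hℓ a; omega,
    fun a => by have := h.hm a; have := h'.hm a; omega,
    fun e a ha => by have := h.hinc e a ha; have := h'.hinc e a ha; omega,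
    fun x hx => by
      rcases List.mem_cons.1 hx with rfl | hx
      · simp only; omega
      · have := h.hL x hx; have := h'.hL x hx; omega⟩ ⟨a, by simp [ha, ha']⟩ ⟨b, by simp [hb, hb']⟩
  have e2 := hK (fun a => max (ℓ a) (ℓ' a)) (fun e => max (m e) (m' e)) ⟨
    fun a => by have := h.hℓ a; have := h'.hℓ a; omega,
    fun a => by have := h.hm a; have := h'.hm a; omega,
    fun e a ha => by have := h.hinc e a ha; have := h'.hinc e a ha; omega,
    fun x hx => by
      rcases List.mem_cons.1 hx with rfl | hx
      · simp only; omega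
      · have := h.hL x hx; have := h'.hL x hx; omega⟩ ⟨a, by simp [ha, ha']⟩ ⟨b, by simp [hb, hb']⟩
  omega

theorem reduce {α E : Type*} [Fintype E] (inc : E → Set α) (k : ℕ) (R : E → E → Prop)
    (hR : ∀ x y, R x y → R y x) (L : List (E × E)) :
    (∀ x ∈ L, R x.1 x.2) → ∀ φ : E → E,
    (∀ e e', φ e = φ e' → Relation.ReflTransGen (fun x y => R x y ∧ φ x = φ y) e e') →
    KL inc L φ k →
    ∃ φ' : E → E,
      (∀ e e', φ' e = φ' e' → Relation.ReflTransGen (fun x y => R x y ∧ φ' x = φ' y) e e') ∧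
      KL inc [] φ' k := by
  induction L with
  | nil => intro _ φ h1 h2; exact ⟨φ, h1, h2⟩
  | cons x L ih =>
    obtain ⟨p, q⟩ := x
    intro hL φ hφ hK
    have hL' : ∀ x ∈ L, R x.1 x.2 := fun x hx => hL x (List.mem_cons_of_mem _ hx)
    have hpq : R p q := hL (p, q) List.mem_cons_self
    by_cases hA : KL inc L φ k
    · exact ih hL' φ hφ hA
    set φ' : E → E := fun e => if φ e = φ q then φ p else φ e with hφ'
    have lift : ∀ e e', φ e = φ e' → Relation.ReflTransGen (fun x y => R x y ∧ φ' x = φ' y) e e' :=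
      fun e e' h => Relation.ReflTransGen.mono (fun x y hxy => ⟨hxy.1, by simp only [hφ', hxy.2]⟩) _ _ (hφ e e' h)
    have hpq' : φ' p = φ' q := by simp [hφ']
    by_cases hB : KL inc L φ' k
    · apply ih hL' φ' ?_ hB
      intro e e' he
      by_cases h1 : φ e = φ q <;> by_cases h2 : φ e' = φ q
      · exact lift _ _ (h1.trans h2.symm)
      · simp only [hφ', h1, h2, if_true, if_false] at he
        exact (lift _ _ h1).trans (.head ⟨hR _ _ hpq, hpq'.symm⟩ (lift _ _ he))
      · simp only [hφ', h1, h2, if_true, if_false] at he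
        exact (lift _ _ he).trans (.head ⟨hpq, hpq'⟩ (lift _ _ h2.symm))
      · simp only [hφ', h1, h2, if_false] at he
        exact lift _ _ he
    exfalso
    by_cases hPQ : φ p = φ q
    · apply hA
      intro ℓ m h
      apply hK ℓ m
      refine ⟨h.hℓ, h.hm, h.hinc, fun x hx => ?_⟩
      rcases List.mem_cons.1 hx with rfl | hx
      · simp [hPQ]
      · exact h.hL x hx
    simp only [KL, not_forall, not_le] at hA hB
    obtain ⟨ℓ, m, h, ⟨a1, ha1⟩, ⟨a2, ha2⟩, hlt⟩ := hA
    obtain ⟨ℓ', m', h', ⟨b1, hb1⟩, ⟨b2, hb2⟩, hlt'⟩ := hB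
    set m'' : E → ℤ := fun y => if y = φ q then m' (φ p) else m' y with hm''
    have hmm : ∀ e, m'' (φ e) = m' (φ' e) := by
      intro e
      by_cases he : φ e = φ q <;> simp [hm'', hφ', he]
    have hLab : Lab inc L φ ℓ' m'' := by
      refine ⟨h'.hℓ, fun e => ?_, fun e a ha => ?_, fun x hx => ?_⟩
      · simp only [hm'']; split_ifs <;> exact h'.hm _
      · rw [hmm]; exact h'.hinc e a ha
      · rw [hmm, hmm]; exact h'.hL x hx
    have hqv : m'' (φ q) = m' (φ p) := by simp [hm'']
    have hpv : m'' (φ p) = m' (φ p) := by simp [hm'']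
    have hzc : zc φ m'' ≤ zc φ' m' + 1 ∧ (m' (φ p) ≠ 0 → zc φ m'' ≤ zc φ' m') := by
      have hsub : (Finset.univ.image φ).filter (fun y => m'' y = 0) ⊆
          insert (φ q) ((Finset.univ.image φ').filter (fun y => m' y = 0)) := by
        intro y hy
        simp only [Finset.mem_filter, Finset.mem_image, Finset.mem_univ, true_and] at hy
        obtain ⟨⟨e, rfl⟩, hy⟩ := hy
        by_cases he : φ e = φ q
        · rw [he]; exact Finset.mem_insert_self _ _
        · apply Finset.mem_insert_of_mem
          have : φ' e = φ e := by simp [hφ', he]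
          rw [hmm, this] at hy
          simp only [Finset.mem_filter, Finset.mem_image, Finset.mem_univ, true_and]
          exact ⟨⟨e, this⟩, hy⟩
      refine ⟨(Finset.card_le_card hsub).trans (Finset.card_insert_le _ _), fun hne => ?_⟩
      apply Finset.card_le_card
      intro y hy
      have h1 := hsub hy
      rw [Finset.mem_insert] at h1
      rcases h1 with rfl | h1
      · rw [Finset.mem_filter, hqv] at hy; exact absurd hy.2 hne
      · exact h1
    have h0 : m' (φ p) = 0 := by
      by_contra hne
      have := hK ℓ' m'' ⟨hLab.hℓ, hLab.hm, hLab.hinc, fun x hx => by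
        rcases List.mem_cons.1 hx with rfl | hx
        · simp only [hqv, hpv]; omega
        · exact hLab.hL x hx⟩ ⟨b1, hb1⟩ ⟨b2, hb2⟩
      have := hzc.2 hne
      omega
    rw [h0] at hqv hpv
    have hfin : 2 * k ≤ zc φ m + zc φ m'' := by
      by_cases hov : (∃ a, ℓ a = 1 ∧ ℓ' a = 1) ∧ (∃ a, ℓ a = -1 ∧ ℓ' a = -1)
      · exact uncross_s16 hK h hLab hpv hqv hov.1 hov.2
      · rw [← zc_neg φ m'']
        refine uncross_s16 hK h hLab.neg (by simp [hpv]) (by simp [hqv]) ?_ ?_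
        · simp only [Pi.neg_apply]
          rw [not_and_or] at hov
          rcases hov with hov | hov <;> push Not at hov
          · exact ⟨a1, ha1, by have := hov a1 ha1; have := h'.hℓ a1; omega⟩
          · exact ⟨b2, by have := h.hℓ b2; have := hov b2; omega, by omega⟩
        · simp only [Pi.neg_apply]
          rw [not_and_or] at hov
          rcases hov with hov | hov <;> push Not at hov
          · exact ⟨b1, by have := h.hℓ b1; have := hov b1; omega, by omega⟩
          · exact ⟨a2, ha2, by have := hov a2 ha2; have := h'.hℓ a2; omega⟩
    have := hzc.1
    omega

end Reduce
section Final
open Classical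

abbrev Elt {V : Type*} (G : SimpleGraph V) (T : Set V) : Type _ :=
  {v : V // v ∉ T} ⊕ {e : Sym2 V // e ∈ G.edgeSet ∧ ∀ v ∈ e, v ∈ T}

def einc {V : Type*} (G : SimpleGraph V) (T : Set V) : Elt G T → Set T
  | .inl w => {t | G.Adj w.1 t.1}
  | .inr e => {t | t.1 ∈ e.1}

def eR {V : Type*} (G : SimpleGraph V) (T : Set V) : Elt G T → Elt G T → Prop
  | .inl a, .inl b => G.Adj a.1 b.1
  | _, _ => False

lemma eR_symm {V : Type*} (G : SimpleGraph V) (T : Set V) (x y : Elt G T) (h : eR G T x y) :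
    eR G T y x := by
  rcases x with x | x <;> rcases y with y | y <;> simp only [eR] at h ⊢
  exact h.symm

def OnW {V : Type*} {G : SimpleGraph V} {T : Set V} {u v : V} (p : G.Walk u v) : Elt G T → Prop
  | .inl w => w.1 ∈ p.support
  | .inr e => e.1 ∈ p.edges

lemma walk_zero {V : Type*} {G : SimpleGraph V} {T : Set V} (ℓ : T → ℤ) (m : Elt G T → ℤ)
    (hℓ : ∀ a, ℓ a = 1 ∨ ℓ a = -1) (hm : ∀ e, -1 ≤ m e ∧ m e ≤ 1)
    (hinc : ∀ e, ∀ a ∈ einc G T e, m e - ℓ a ≤ 1 ∧ ℓ a - m e ≤ 1)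
    (hR : ∀ x y, eR G T x y → m x - m y ≤ 1 ∧ m y - m x ≤ 1)
    {u v : V} (p : G.Walk u v) :
    (if h : u ∈ T then ℓ ⟨u, h⟩ else m (.inl ⟨u, h⟩)) = 1 →
    (if h : v ∈ T then ℓ ⟨v, h⟩ else m (.inl ⟨v, h⟩)) = -1 →
    ∃ e : Elt G T, m e = 0 ∧ OnW p e := by
  induction p with
  | nil => intro h1 h2; omega
  | @cons u w v h p ih =>
    intro h1 h2
    by_cases hw1 : (if h : w ∈ T then ℓ ⟨w, h⟩ else m (.inl ⟨w, h⟩)) = 1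
    · obtain ⟨e, he, ho⟩ := ih hw1 h2
      refine ⟨e, he, ?_⟩
      rcases e with e | e
      · simp only [OnW, Walk.support_cons, List.mem_cons] at ho ⊢; exact Or.inr ho
      · simp only [OnW, Walk.edges_cons, List.mem_cons] at ho ⊢; exact Or.inr ho
    by_cases hwT : w ∈ T
    · rw [dif_pos hwT] at hw1
      have hwm : ℓ ⟨w, hwT⟩ = -1 := (hℓ _).resolve_left hw1
      by_cases huT : u ∈ T
      · rw [dif_pos huT] at h1
        have hE : s(u, w) ∈ G.edgeSet ∧ ∀ v ∈ s(u, w), v ∈ T := by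
          refine ⟨h, fun x hx => ?_⟩
          rcases Sym2.mem_iff.1 hx with rfl | rfl <;> assumption
        refine ⟨.inr ⟨s(u, w), hE⟩, ?_, ?_⟩
        · have e1 := hinc (.inr ⟨s(u, w), hE⟩) ⟨u, huT⟩ (by simp [einc])
          have e2 := hinc (.inr ⟨s(u, w), hE⟩) ⟨w, hwT⟩ (by simp [einc])
          omega
        · simp [OnW]
      · rw [dif_neg huT] at h1
        have := hinc (.inl ⟨u, huT⟩) ⟨w, hwT⟩ h
        omega
    · rw [dif_neg hwT] at hw1
      by_cases hz : m (.inl ⟨w, hwT⟩) = 0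
      · exact ⟨_, hz, by simp [OnW]⟩
      have hb := hm (.inl ⟨w, hwT⟩)
      by_cases huT : u ∈ T
      · rw [dif_pos huT] at h1
        have := hinc (.inl ⟨w, hwT⟩) ⟨u, huT⟩ h.symm
        omega
      · rw [dif_neg huT] at h1
        have := hR (.inl ⟨u, huT⟩) (.inl ⟨w, hwT⟩) h
        omega

lemma init_KL {V : Type*} [Fintype V] {G : SimpleGraph V} {T : Set V} {k : ℕ}
    (hconn : ∀ u ∈ T, ∀ v ∈ T, u ≠ v → k ≤ elemConn G T u v) (L : List (Elt G T × Elt G T))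
    (hL : ∀ x y, eR G T x y → (x, y) ∈ L) : KL (einc G T) L id k := by
  rintro ℓ m h ⟨a, ha⟩ ⟨b, hb⟩
  refine (hconn a a.2 b b.2 (fun hab => ?_)).trans ?_
  · rw [Subtype.ext hab] at ha; omega
  refine csSup_le ⟨0, fun i => i.elim0, fun i => i.elim0, fun i => i.elim0⟩ ?_
  rintro n ⟨P, hP, hd⟩
  have hz : ∀ i, ∃ e : Elt G T, m e = 0 ∧ OnW (P i) e := fun i =>
    walk_zero ℓ m h.hℓ h.hm h.hinc (fun x y hxy => h.hL (x, y) (hL x y hxy)) (P i)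
      (by simpa using ha) (by simpa using hb)
  choose f hf1 hf2 using hz
  have hinj : Function.Injective f := by
    intro i j hij
    by_contra hne
    have h1 := hf2 i
    have h2 := hf2 j
    rw [← hij] at h2
    obtain ⟨d1, d2⟩ := hd i j hne
    rcases hfi : f i with e | e <;> rw [hfi] at h1 h2
    · have := d2 _ h1 h2
      simp only [Set.mem_union, Set.mem_insert_iff, Set.mem_singleton_iff] at this
      rcases this with h | h | h
      · exact e.2 h
      · exact e.2 (h ▸ a.2)
      · exact e.2 (h ▸ b.2)
    · exact d1 _ h1 h2
  have := Finset.card_le_card_of_injOn (s := Finset.univ)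
    (t := (Finset.univ.image (id : Elt G T → Elt G T)).filter (fun y => m y = 0)) f
    (fun i _ => by simp [hf1]) hinj.injOn
  simpa [zc] using this

noncomputable def hN {V : Type*} [Fintype V] (G : SimpleGraph V) (T : Set V) (φ : Elt G T → Elt G T)
    (y : Elt G T) : Finset T :=
  Finset.univ.filter (fun t => ∃ e, φ e = y ∧ t ∈ einc G T e)

lemma final_KC {V : Type*} [Fintype V] {G : SimpleGraph V} {T : Set V} {k : ℕ}
    {φ : Elt G T → Elt G T} (h : KL (einc G T) [] φ k) :
    KC Finset.univ (Finset.univ.image φ) (hN G T φ) k := by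
  rintro C ⟨⟨a, -, ha⟩, ⟨b, -, hb⟩⟩
  set N := hN G T φ
  let ℓ : T → ℤ := fun t => if t ∈ C then 1 else -1
  let m : Elt G T → ℤ := fun y => if Crs N C y then 0 else if ∃ a ∈ N y, a ∈ C then 1 else -1
  have := h ℓ m ⟨fun t => by simp only [ℓ]; split_ifs <;> simp,
    fun e => by simp only [m]; split_ifs <;> simp,
    fun e t ht => by
      have htN : t ∈ N (φ e) := Finset.mem_filter.2 ⟨Finset.mem_univ _, e, rfl, ht⟩
      simp only [m, ℓ]
      by_cases hc : Crs N C (φ e)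
      · simp only [hc, if_true]; split_ifs <;> simp
      · by_cases htC : t ∈ C
        · have : ∃ a ∈ N (φ e), a ∈ C := ⟨t, htN, htC⟩
          simp [hc, this, htC]
        · have : ¬ ∃ a ∈ N (φ e), a ∈ C := fun hh => hc ⟨hh, t, htN, htC⟩
          simp [hc, this, htC],
    by simp⟩ ⟨a, by simp [ℓ, ha]⟩ ⟨b, by simp [ℓ, hb]⟩
  refine this.trans (Finset.card_le_card ?_)
  intro y hy
  rw [Finset.mem_filter] at hy ⊢
  refine ⟨by simpa only [Finset.mem_image] using hy.1, ?_⟩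
  by_contra hcon
  have h2 := hy.2
  simp only [m, hcon, if_false] at h2
  split_ifs at h2 <;> simp at h2

lemma stein {V : Type*} (G : SimpleGraph V) (T : Set V) (H : SimpleGraph V) (hHG : H ≤ G)
    (hr : ∀ u ∈ T, ∀ v ∈ T, H.Reachable u v) : ∃ F ≤ H, IsSteinerTree G T F := by
  rcases T.eq_empty_or_nonempty with rfl | ⟨t0, ht0⟩
  · refine ⟨⊥, bot_le, bot_le, isAcyclic_bot, ?_⟩
    intro x hx
    simp at hx
  let H' : SimpleGraph V :=
    { Adj := fun u v => H.Adj u v ∧ H.Reachable t0 u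
      symm := ⟨fun u v h => ⟨h.1.symm, h.2.trans h.1.reachable⟩⟩
      loopless := ⟨fun u h => H.loopless.irrefl u h.1⟩ }
  have hH' : ∀ x y, ∀ p : H.Walk x y, H.Reachable t0 x → H'.Reachable x y := by
    intro x y p
    induction p with
    | nil => intro _; exact Reachable.refl _
    | cons h p ih =>
      intro hx
      have : H'.Adj _ _ := ⟨h, hx⟩
      exact this.reachable.trans (ih (hx.trans h.reachable))
  obtain ⟨F, hF, hFa, hFr⟩ := H'.exists_isAcyclic_reachable_eq_le
  have hFH : F ≤ H := fun u v h => (hF h).1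
  have key : ∀ x ∈ F.support ∪ T, F.Reachable t0 x := by
    intro x hx
    have : H.Reachable t0 x := by
      rcases hx with ⟨y, hy⟩ | hx
      · exact (hF hy).2
      · exact hr t0 ht0 x hx
    rw [hFr]
    obtain ⟨p⟩ := this
    exact hH' _ _ p (Reachable.refl _)
  exact ⟨F, hFH, hFH.trans hHG, hFa, fun x hx y hy => (key x hx).symm.trans (key y hy)⟩

def HP {V : Type*} (G : SimpleGraph V) (T : Set V) (φ : Elt G T → Elt G T) (P : Finset (Elt G T)) :
    SimpleGraph V where
  Adj u v := G.Adj u v ∧ (∀ h : u ∉ T, φ (.inl ⟨u, h⟩) ∈ P) ∧ (∀ h : v ∉ T, φ (.inl ⟨v, h⟩) ∈ P) ∧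
    (∀ h, u ∈ T → v ∈ T → φ (.inr ⟨s(u, v), h⟩) ∈ P)
  symm := ⟨by
    rintro u v ⟨h1, h2, h3, h4⟩
    refine ⟨h1.symm, h3, h2, fun h hu hv => ?_⟩
    have : s(v, u) = s(u, v) := Sym2.eq_swap
    simp only [this]
    exact h4 _ hv hu⟩
  loopless := ⟨fun u h => G.loopless.irrefl u h.1⟩

lemma HP_reach {V : Type*} [Fintype V] {G : SimpleGraph V} {T : Set V}
    {φ : Elt G T → Elt G T} {P : Finset (Elt G T)}
    (hφ : ∀ e e', φ e = φ e' → Relation.ReflTransGen (fun x y => eR G T x y ∧ φ x = φ y) e e')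
    (hK : KC Finset.univ P (hN G T φ) 1) :
    ∀ u ∈ T, ∀ v ∈ T, (HP G T φ P).Reachable u v := by
  intro u hu v hv
  by_contra hcon
  let C : Set T := {t | (HP G T φ P).Reachable u t.1}
  have hsp : Splits Finset.univ C :=
    ⟨⟨⟨u, hu⟩, Finset.mem_univ _, Reachable.refl _⟩, ⟨⟨v, hv⟩, Finset.mem_univ _, hcon⟩⟩
  obtain ⟨y, hy⟩ := Finset.card_pos.1 (hK C hsp)
  rw [Finset.mem_filter] at hy
  obtain ⟨hyP, ⟨a, ha, haC⟩, ⟨b, hb, hbC⟩⟩ := hy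
  simp only [hN, Finset.mem_filter, Finset.mem_univ, true_and] at ha hb
  obtain ⟨e, he, hae⟩ := ha
  obtain ⟨e', he', hbe⟩ := hb
  apply hbC
  have ch := hφ e e' (he.trans he'.symm)
  have key : ∀ t ∈ einc G T e', (HP G T φ P).Reachable u t.1 := by
    clear hbe hbC hcon
    have hadj : ∀ (w : {v : V // v ∉ T}) (t : T), φ (.inl w) = y → t ∈ einc G T (.inl w) →
        (HP G T φ P).Adj w.1 t.1 := by
      intro w t hw ht
      exact ⟨ht, fun h => by rw [hw]; exact hyP, fun h => absurd t.2 h, fun _ h => absurd h w.2⟩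
    have main : (∃ w, e' = .inl w ∧ (HP G T φ P).Reachable u w.1) ∨
        (e' = e ∧ ∃ s, e = .inr s) := by
      clear he' 
      induction ch with
      | refl =>
        rcases e with w | s
        · left
          exact ⟨w, rfl, Reachable.trans haC (hadj w a he hae).symm.reachable⟩
        · right; exact ⟨rfl, s, rfl⟩
      | @tail x z hx hxz ih =>
        rcases ih with ⟨w, rfl, hw⟩ | ⟨rfl, s, rfl⟩
        · rcases z with z | z
          · left
            refine ⟨z, rfl, hw.trans (Adj.reachable ?_)⟩
            have hwy : φ (.inl w) = y := by
              have : ∀ x, Relation.ReflTransGen (fun x y => eR G T x y ∧ φ x = φ y) e x → φ x = y := by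
                intro x hx
                induction hx with
                | refl => exact he
                | tail _ h ih => rw [← h.2]; exact ih
              exact this _ hx
            have hzy : φ (.inl z) = y := by rw [← hxz.2]; exact hwy
            exact ⟨hxz.1, fun h => by rw [hwy]; exact hyP, fun h => by rw [hzy]; exact hyP,
              fun _ h => absurd h w.2⟩
          · exact absurd hxz.1 (by simp [eR])
        · exact absurd hxz.1 (by simp [eR])
    intro t ht
    rcases main with ⟨w, rfl, hw⟩ | ⟨rfl, s, rfl⟩
    · exact hw.trans (hadj w t he' ht).reachable
    · by_cases hat : a = t
      · subst hat; exact haC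
      · have hs : s.1 = s(a.1, t.1) := by
          have : a.1 ≠ t.1 := fun h => hat (Subtype.ext h)
          exact (Sym2.mem_and_mem_iff this).1 ⟨hae, ht⟩
        refine Reachable.trans haC (Adj.reachable ?_)
        refine ⟨?_, fun h => absurd a.2 h, fun h => absurd t.2 h, fun h _ _ => ?_⟩
        · have := s.2.1; rw [hs] at this; exact this
        · have : (⟨s(a.1, t.1), h⟩ : {e : Sym2 V // e ∈ G.edgeSet ∧ ∀ v ∈ e, v ∈ T}) = s :=
            Subtype.ext hs.symm
          rw [this, he]; exact hyP
  exact key b hbe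

lemma HP_disj {V : Type*} {G : SimpleGraph V} {T : Set V}
    {φ : Elt G T → Elt G T} {P Q : Finset (Elt G T)} (hd : Disjoint P Q) {F F' : SimpleGraph V}
    (h1 : F ≤ HP G T φ P) (h2 : F' ≤ HP G T φ Q) : EDisj T F F' := by
  rw [Finset.disjoint_left] at hd
  constructor
  · rw [Set.disjoint_left]
    intro e
    induction e using Sym2.ind with
    | _ u v =>
      intro he he'
      rw [SimpleGraph.mem_edgeSet] at he he'
      obtain ⟨hG, a1, a2, a3⟩ := h1 he
      obtain ⟨_, b1, b2, b3⟩ := h2 he'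
      by_cases hu : u ∈ T
      · by_cases hv : v ∈ T
        · have hE : s(u, v) ∈ G.edgeSet ∧ ∀ x ∈ s(u, v), x ∈ T := by
            refine ⟨hG, fun x hx => ?_⟩
            rcases Sym2.mem_iff.1 hx with rfl | rfl <;> assumption
          exact hd (a3 hE hu hv) (b3 hE hu hv)
        · exact hd (a2 hv) (b2 hv)
      · exact hd (a1 hu) (b1 hu)
  · rintro x ⟨y, hy⟩ ⟨z, hz⟩
    by_contra hx
    exact hd ((h1 hy).2.1 hx) ((h2 hz).2.1 hx)

/-- trees from a hypergraph packing -/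
lemma trees_of_pack {V : Type*} [Fintype V] {G : SimpleGraph V} {T : Set V}
    {φ : Elt G T → Elt G T} {n : ℕ} {P : Fin n → Finset (Elt G T)}
    (hφ : ∀ e e', φ e = φ e' → Relation.ReflTransGen (fun x y => eR G T x y ∧ φ x = φ y) e e')
    (hd : ∀ i j, i ≠ j → Disjoint (P i) (P j))
    (hK : ∀ j, KC Finset.univ (P j) (hN G T φ) 1) :
    ∃ F : Fin n → SimpleGraph V,
        (∀ j, IsSteinerTree G T (F j)) ∧
        ∀ i j, i ≠ j → EDisj T (F i) (F j) := by
  have := fun j => stein G T (HP G T φ (P j)) (fun u v h => h.1) (HP_reach hφ (hK j))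
  choose F hF1 hF2 using this
  exact ⟨F, hF2, fun i j hij => HP_disj (hd i j hij) (hF1 i) (hF1 j)⟩

lemma pack_tw {V : Type*} [Fintype V] {G : SimpleGraph V} {T : Set V} {r k q : ℕ}
    (htw : HasTreeDecompWidthLE G r) (hr : 1 ≤ r) (hq : 1 ≤ q) (hk : r * (q * r) + r ≤ k)
    {φ : Elt G T → Elt G T}
    (hφ : ∀ e e', φ e = φ e' → Relation.ReflTransGen (fun x y => eR G T x y ∧ φ x = φ y) e e')
    (hK : KC Finset.univ (Finset.univ.image φ) (hN G T φ) k) :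
    ∃ P : Fin q → Finset (Elt G T), (∀ i j, i ≠ j → Disjoint (P i) (P j)) ∧
      ∀ j, KC Finset.univ (P j) (hN G T φ) 1 := by
  obtain ⟨ι, Tr, bag, hc, hac, hcov, hedge, hconv, hbag⟩ := htw
  obtain ⟨ρ⟩ := hc.nonempty
  have hnode : ∀ e : {e : Sym2 V // e ∈ G.edgeSet ∧ ∀ v ∈ e, v ∈ T}, ∃ i, ∀ v ∈ e.1, v ∈ bag i := by
    rintro ⟨e, he, -⟩
    induction e using Sym2.ind with
    | _ u v =>
      obtain ⟨i, h1, h2⟩ := hedge u v he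
      refine ⟨i, fun x hx => ?_⟩
      rcases Sym2.mem_iff.1 hx with rfl | rfl <;> assumption
  choose nd hnd using hnode
  have hvc : ∀ v : V, WConn Tr {i | v ∈ bag i} := by
    intro v i hi j hj
    obtain ⟨p, hp, -⟩ := hc.exists_path_of_dist i j
    exact ⟨p, fun x hx => hconv v i j hi hj p hp x hx⟩
  let BE : Elt G T → Set ι := fun e => Sum.elim (fun w => {i | w.1 ∈ bag i}) (fun e => {nd e}) e
  have hBE : ∀ e, WConn Tr (BE e) := by
    rintro (w | e)
    · exact hvc w.1
    · rintro i hi j hj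
      have hi' : i = nd e := hi
      have hj' : j = nd e := hj
      subst hi' hj'
      exact ⟨Walk.nil, fun x hx => by simpa [BE] using hx⟩
  obtain ⟨BY, hBYd⟩ : ∃ BY : Elt G T → Set ι, ∀ y i, i ∈ BY y ↔ ∃ e, φ e = y ∧ i ∈ BE e :=
    ⟨fun y => {i | ∃ e, φ e = y ∧ i ∈ BE e}, fun _ _ => Iff.rfl⟩
  have inE : ∀ e, ∀ i ∈ BE e, ∀ j ∈ BE e, ∃ p : Tr.Walk i j, ∀ x ∈ p.support, x ∈ BY (φ e) :=
    fun e i hi j hj => (hBE e i hi j hj).imp (fun p hp x hx => (hBYd _ _).2 ⟨e, rfl, hp x hx⟩)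
  have hBY : ∀ y, WConn Tr (BY y) := by
    intro y i hi0 j hj0
    obtain ⟨e, he, hi⟩ := (hBYd _ _).1 hi0
    obtain ⟨e', he', hj⟩ := (hBYd _ _).1 hj0
    clear hi0 hj0
    have ch := hφ e e' (he.trans he'.symm)
    clear he'
    induction ch generalizing j with
    | refl => subst he; exact inE e i hi j hj
    | @tail x z hx hxz ih =>
      have hxy : φ x = y := by
        have : ∀ x, Relation.ReflTransGen (fun x y => eR G T x y ∧ φ x = φ y) e x → φ x = y := by
          intro x hx
          induction hx with
          | refl => exact he
          | tail _ h ih => rw [← h.2]; exact ih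
        exact this _ hx
      have hzy : φ z = y := by rw [← hxz.2]; exact hxy
      obtain ⟨l, hl1, hl2⟩ : ∃ l, l ∈ BE x ∧ l ∈ BE z := by
        have := hxz.1
        rcases x with x | x <;> rcases z with z | z <;> simp only [eR] at this
        exact hedge _ _ this
      have := inE z l hl2 j hj
      rw [hzy] at this
      exact wconn_append (ih l hl1) this
  obtain ⟨P, -, h2, h3⟩ := hyper_pack Tr hc hac ρ r q k hr hq hk _ (Finset.univ : Finset T)
    (Finset.univ.image φ) (hN G T φ) (fun t => {i | t.1 ∈ bag i}) BY le_rfl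
    (fun _ _ => Finset.subset_univ _) hK (fun t _ => hvc t.1) (fun t _ => hcov t.1)
    (fun y _ => hBY y)
    (by
      intro y _ t ht
      simp only [hN, Finset.mem_filter, Finset.mem_univ, true_and] at ht
      obtain ⟨e, he, ht⟩ := ht
      rcases e with w | e
      · obtain ⟨i, h1, h2⟩ := hedge _ _ ht
        exact ⟨i, h2, (hBYd _ _).2 ⟨_, he, h1⟩⟩
      · exact ⟨nd e, hnd e _ ht, (hBYd _ _).2 ⟨_, he, rfl⟩⟩)
    (by
      intro i
      refine le_trans ?_ (hbag i)
      rw [Set.ncard_eq_toFinset_card', ← Finset.card_filter_add_card_filter_not (s := (bag i).toFinset) (fun v => v ∈ T)]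
      apply Nat.add_le_add
      · apply Finset.card_le_card_of_injOn Subtype.val
        · intro t ht
          simp at ht ⊢
          exact ht
        · exact Subtype.val_injective.injOn
      · have hsub : (Finset.univ.image φ).filter (fun y => i ∈ BY y ∧ (BY y).Nontrivial) ⊆
            ((Finset.univ : Finset {v : V // v ∉ T}).filter (fun w => w.1 ∈ bag i)).image
              (fun w => φ (.inl w)) := by
          intro y hy
          rw [Finset.mem_filter] at hy
          obtain ⟨-, hyi, hnt⟩ := hy
          obtain ⟨e, he, hi⟩ := (hBYd _ _).1 hyi
          rcases e with w | s
          · exact Finset.mem_image.2 ⟨w, Finset.mem_filter.2 ⟨Finset.mem_univ _, hi⟩, he⟩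
          · exfalso
            have huniq : ∀ e', φ e' = y → e' = .inr s := by
              intro e' he'
              have ch := hφ (.inr s) e' (he.trans he'.symm)
              rcases Relation.ReflTransGen.cases_head ch with h | ⟨z, hz, -⟩
              · exact h.symm
              · exact absurd hz.1 (by simp [eR])
            obtain ⟨a, ha, b, hb, hab⟩ := hnt
            obtain ⟨ea, h1, ha⟩ := (hBYd _ _).1 ha
            obtain ⟨eb, h2, hb⟩ := (hBYd _ _).1 hb
            rw [huniq _ h1] at ha
            rw [huniq _ h2] at hb
            have ha' : a = nd s := ha
            have hb' : b = nd s := hb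
            exact hab (ha'.trans hb'.symm)
        refine (Finset.card_le_card hsub).trans (Finset.card_image_le.trans ?_)
        apply Finset.card_le_card_of_injOn Subtype.val
        · intro t ht
          simp at ht ⊢
          exact ⟨ht, t.2⟩
        · exact Subtype.val_injective.injOn)
  exact ⟨P, h2, h3⟩

end Final
/-- **Packing Steiner trees in bounded-treewidth graphs.** If `G` has treewidth at most
`r - 1` and every pair of terminals is `k`-element-connected, then `G` contains at least
`k / (12 r² log₂(3r))` pairwise element-disjoint Steiner trees. -/
theorem treewidth_steiner_tree_packing {V : Type*} [Fintype V]
    (G : SimpleGraph V) (r : ℕ) (T : Set V)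
    (htw : HasTreeDecompWidthLE G r) (k : ℕ)
    (hconn : ∀ u ∈ T, ∀ v ∈ T, u ≠ v → k ≤ elemConn G T u v) :
    ∃ n : ℕ,
      (k : ℝ) / (12 * (r : ℝ) ^ 2 * Real.logb 2 (3 * r)) ≤ (n : ℝ) ∧
      ∃ F : Fin n → SimpleGraph V,
        (∀ j, IsSteinerTree G T (F j)) ∧
        ∀ i j, i ≠ j → EDisj T (F i) (F j) := by
  classical
  rcases Nat.eq_zero_or_pos r with rfl | hr
  · exact ⟨0, by simp, fun i => i.elim0, fun i => i.elim0, fun i => i.elim0⟩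
  rcases Nat.eq_zero_or_pos k with rfl | hk0
  · exact ⟨0, by simp, fun i => i.elim0, fun i => i.elim0, fun i => i.elim0⟩
  let L : List (Elt G T × Elt G T) := (Finset.univ.filter (fun x => eR G T x.1 x.2)).toList
  obtain ⟨φ, hφ, hKL⟩ := reduce (einc G T) k (eR G T) (eR_symm G T) L
    (fun x hx => by simpa [L] using hx) id
    (fun e e' h => by
      have h' : e = e' := h
      subst h'; exact Relation.ReflTransGen.refl)
    (init_KL hconn L (fun x y h => by simpa [L] using h))
  have hKC := final_KC hKL
  have hr1 : (1 : ℝ) ≤ r := by exact_mod_cast hr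
  have hlog : 1 ≤ Real.logb 2 (3 * r) := by
    rw [Real.le_logb_iff_rpow_le (by norm_num) (by positivity)]
    norm_num; linarith
  have hbound : (k : ℝ) / (12 * (r : ℝ) ^ 2 * Real.logb 2 (3 * r)) ≤ k / (12 * (r : ℝ) ^ 2) := by
    apply div_le_div_of_nonneg_left (by positivity) (by positivity)
    have : (0 : ℝ) < 12 * (r : ℝ) ^ 2 := by positivity
    nlinarith
  by_cases hsmall : k ≤ 12 * r ^ 2
  · refine ⟨1, hbound.trans ?_, trees_of_pack (P := fun _ => Finset.univ.image φ) hφ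
      (fun i j hij => absurd (Subsingleton.elim i j) hij)
      (fun j C hC => hk0.trans_le (hKC C hC))⟩
    rw [div_le_iff₀ (by positivity)]
    have : (k : ℝ) ≤ 12 * r ^ 2 := by exact_mod_cast hsmall
    simpa using this
  · push Not at hsmall
    have hrr : r ≤ r ^ 2 := Nat.le_self_pow (by norm_num) r
    have hr2 : 0 < r ^ 2 := by positivity
    set q := (k - r) / r ^ 2 with hqdef
    have hq1 : 1 ≤ q := by
      rw [hqdef, Nat.le_div_iff_mul_le hr2]; omega
    have hq2 : q * r ^ 2 ≤ k - r := Nat.div_mul_le_self _ _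
    have hq3 : k - r < r ^ 2 * (q + 1) := Nat.lt_mul_div_succ _ hr2
    have hqk : r * (q * r) + r ≤ k := by
      have : r * (q * r) = q * r ^ 2 := by ring
      omega
    obtain ⟨P, hP1, hP2⟩ := pack_tw htw hr hq1 hqk hφ hKC
    refine ⟨q, hbound.trans ?_, trees_of_pack hφ hP1 hP2⟩
    rw [div_le_iff₀ (by positivity)]
    have h1 : k < r ^ 2 * (q + 1) + r := by omega
    have h1' : (k : ℝ) < r ^ 2 * (q + 1) + r := by exact_mod_cast h1
    have h2' : (12 * r ^ 2 : ℝ) < k := by exact_mod_cast hsmall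
    have h3' : (r : ℝ) ≤ r ^ 2 := by exact_mod_cast hrr
    have h4' : (1 : ℝ) ≤ q := by exact_mod_cast hq1
    have h5' : (r : ℝ) ^ 2 ≤ q * r ^ 2 := by nlinarith
    nlinarith
end
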